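/- arXiv:1909.06542 — 2 statements merged into one kernel-verified Lean document; each statement's English description precedes it below -/
import Mathlib

section
/- Let B ≥ 1 and let u : ℝ → ℝ be 1-periodic with |u(x)| ≤ 1 for all x, and suppose u admits an extension ũ to the strip {z ∈ ℂ : |Im z| < 1} that is subharmonic there and satisfies |ũ(z)| ≤ B. Then there is an absolute constant C such that the Fourier coefficients û(k) = ∫₀¹ u(x)·e^{−2πikx} dx satisfy |û(k)| ≤ C·B/|k| for all k ∈ ℤ \ {0}. -/
open MeasureTheory

/-- A continuous function on an open set `U ⊆ ℂ` is subharmonic if its value at the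
center of any closed disk contained in `U` is at most its average over the boundary
circle. -/
def Subharmonic (U : Set ℂ) (w : ℂ → ℝ) : Prop :=
  ContinuousOn w U ∧
    ∀ z₀ : ℂ, ∀ r : ℝ, 0 < r → Metric.closedBall z₀ r ⊆ U →
      w z₀ ≤ (2 * Real.pi)⁻¹ *
        ∫ t in (0:ℝ)..(2 * Real.pi), w (z₀ + r * Complex.exp (t * Complex.I))

/-!
Write `w` for the extension, fix a frequency `a ≠ 0` and a phase `θ`, and let `χ`, `η` be cutoffs.
For `φ ≥ 0` on the line, let `g` be the decaying solution of `g'' - a² g = -2 |a| φ`; then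
`0 ≤ g ≤ ∫ φ`, so that `F = χ(x) η(y) (∫ φ + cos (a x + θ) g(y))` is nonnegative. Since `g` absorbs
the term of size `a²`, its Laplacian is `-2 |a| χ(x) cos (a x + θ) η(y) φ(y)` up to an error whose
`L¹` norm is at most a constant times `∫ φ`, uniformly in `a`. Testing the subharmonic function
`w` against `F` gives `∫ m φ ≤ C B / |a| ∫ φ`, where
`m(y) = η(y) ∫ w(x + i y) χ(x) cos (a x + θ) dx`. Taking for `φ` the positive part of
`m - C B / |a|` shows `m ≤ C B / |a|` everywhere. If the integer translates of `χ` sum to `1` and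
`a = 2πk`, then for a suitable `θ` the value `m(0)` is the absolute value of the `k`-th Fourier
coefficient.
-/

section

open Set Filter Topology InnerProductSpace Laplacian Real

section SecondOrderExpansion

variable {E : Type*} [NormedAddCommGroup E] [NormedSpace ℝ E] {F : E → ℝ} {ε : ℝ}

theorem abs_sub_taylor_two_le (hF : ContDiff ℝ 2 F) {x h : E}
    (hε : ∀ y ∈ Metric.closedBall x ‖h‖,
      ‖fderiv ℝ (fderiv ℝ F) y - fderiv ℝ (fderiv ℝ F) x‖ ≤ ε) :
    |F (x + h) - F x - fderiv ℝ F x h - fderiv ℝ (fderiv ℝ F) x h h / 2| ≤ ε * ‖h‖ ^ 2 := by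
  have hF' : ContDiff ℝ 1 (fderiv ℝ F) := hF.fderiv_right (by norm_num)
  have norm_smul_le {t : ℝ} (ht : t ∈ Ico (0 : ℝ) 1) : ‖t • h‖ ≤ ‖h‖ := by
    rw [norm_smul, Real.norm_of_nonneg ht.1]
    exact mul_le_of_le_one_left (norm_nonneg h) ht.2.le
  have fderiv_expansion {t : ℝ} (ht : t ∈ Ico (0 : ℝ) 1) :
      ‖fderiv ℝ F (x + t • h) - fderiv ℝ F x - fderiv ℝ (fderiv ℝ F) x (t • h)‖ ≤ ε * ‖h‖ := by
    have hth : x + t • h ∈ Metric.closedBall x ‖h‖ := by simpa using norm_smul_le ht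
    have := (convex_closedBall x ‖h‖).norm_image_sub_le_of_norm_fderiv_le'
      (fun y _ ↦ hF'.differentiable one_ne_zero y) hε
      (Metric.mem_closedBall_self (norm_nonneg h)) hth
    rw [add_sub_cancel_left] at this
    have hε0 : 0 ≤ ε := le_trans (by positivity) (hε x (by simp))
    exact this.trans (by gcongr; exact norm_smul_le ht)
  let remainder : ℝ → ℝ := fun t ↦
    F (x + t • h) - t * fderiv ℝ F x h - t ^ 2 / 2 * fderiv ℝ (fderiv ℝ F) x h h
  have remainder_hasDerivAt (t : ℝ) : HasDerivAt remainder
      (fderiv ℝ F (x + t • h) h - fderiv ℝ F x h - t * fderiv ℝ (fderiv ℝ F) x h h) t := by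
    have hline : HasDerivAt (fun s : ℝ ↦ x + s • h) h t := by
      simpa using ((hasDerivAt_id t).smul_const h).const_add x
    have hFline := (hF.differentiable two_ne_zero (x + t • h)).hasFDerivAt.comp_hasDerivAt t hline
    have hlin := (hasDerivAt_id t).mul_const (fderiv ℝ F x h)
    have hquad := ((hasDerivAt_pow 2 t).div_const 2).mul_const (fderiv ℝ (fderiv ℝ F) x h h)
    exact ((hFline.sub hlin).sub hquad).congr_deriv (by simp)
  have remainder_bound := norm_image_sub_le_of_norm_deriv_le_segment_01'
    (f := remainder) (C := ε * ‖h‖ ^ 2) (fun t _ ↦ (remainder_hasDerivAt t).hasDerivWithinAt)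
    fun t ht ↦ by
      have := (ContinuousLinearMap.le_opNorm _ h).trans
        (mul_le_mul_of_nonneg_right (fderiv_expansion ht) (norm_nonneg h))
      simpa [mul_assoc, sq] using this
  convert remainder_bound using 1
  simp only [remainder, Real.norm_eq_abs, one_smul, zero_smul, add_zero]
  ring_nf

end SecondOrderExpansion

section CircleAverage

theorem circleMap_sub_center_eq (c : ℂ) (r t : ℝ) :
    circleMap c r t - c = (r * cos t) • (1 : ℂ) + (r * sin t) • Complex.I := by
  simp only [circleMap_sub_center, circleMap_zero, Complex.exp_mul_I, Complex.real_smul]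
  push_cast
  ring

theorem circleAverage_linear_eq_zero (l : ℂ →L[ℝ] ℝ) (c : ℂ) (r : ℝ) :
    circleAverage (fun z ↦ l (z - c)) c r = 0 := by
  simp only [circleAverage, circleMap_sub_center_eq, map_add, map_smul, smul_eq_mul]
  rw [intervalIntegral.integral_add]
  · simp
  all_goals exact Continuous.intervalIntegrable (by fun_prop) _ _

theorem circleAverage_bilinear_self (b : ℂ →L[ℝ] ℂ →L[ℝ] ℝ) (c : ℂ) (r : ℝ) :
    circleAverage (fun z ↦ b (z - c) (z - c)) c r =
      r ^ 2 / 2 * (b 1 1 + b Complex.I Complex.I) := by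
  have expand (t : ℝ) : b (circleMap c r t - c) (circleMap c r t - c) =
      (r ^ 2 * b 1 1) * cos t ^ 2 + (r ^ 2 * b Complex.I Complex.I) * sin t ^ 2
        + r ^ 2 * (b 1 Complex.I + b Complex.I 1) * (sin t * cos t) := by
    simp only [circleMap_sub_center_eq, map_add, map_smul, add_apply, smul_apply, smul_eq_mul]
    ring
  simp only [circleAverage, expand, smul_eq_mul]
  rw [intervalIntegral.integral_add, intervalIntegral.integral_add]
  · simp only [intervalIntegral.integral_const_mul, integral_cos_sq, integral_sin_sq,
      integral_sin_mul_cos₁, sin_two_pi, cos_two_pi, sin_zero, cos_zero]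
    field_simp
    ring
  all_goals exact Continuous.intervalIntegrable (by fun_prop) _ _

theorem laplacian_eq_fderiv_fderiv (F : ℂ → ℝ) (z : ℂ) :
    Δ F z = fderiv ℝ (fderiv ℝ F) z 1 1 + fderiv ℝ (fderiv ℝ F) z Complex.I Complex.I := by
  simp [laplacian_eq_iteratedFDeriv_complexPlane, iteratedFDeriv_two_apply]

theorem abs_circleAverage_sub_laplacian_le {F : ℂ → ℝ} (hF : ContDiff ℝ 2 F) {c : ℂ} {r ε : ℝ}
    (hε : ∀ z ∈ Metric.closedBall c |r|,
      ‖fderiv ℝ (fderiv ℝ F) z - fderiv ℝ (fderiv ℝ F) c‖ ≤ ε) :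
    |circleAverage F c r - F c - r ^ 2 / 4 * Δ F c| ≤ ε * r ^ 2 := by
  have cont := hF.continuous
  let remainder : ℂ → ℝ := fun z ↦
    F z - F c - fderiv ℝ F c (z - c) - (1 / 2 : ℝ) • fderiv ℝ (fderiv ℝ F) c (z - c) (z - c)
  have circleAverage_remainder :
      circleAverage remainder c r = circleAverage F c r - F c - r ^ 2 / 4 * Δ F c := by
    simp only [remainder]
    rw [circleAverage_fun_sub, circleAverage_fun_sub, circleAverage_fun_sub, circleAverage_const,
      circleAverage_linear_eq_zero, circleAverage_fun_smul, circleAverage_bilinear_self,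
      laplacian_eq_fderiv_fderiv, smul_eq_mul]
    · ring
    all_goals exact (Continuous.continuousOn (by fun_prop)).circleIntegrable'
  have remainder_le (z : ℂ) (hz : z ∈ Metric.sphere c |r|) : |remainder z| ≤ ε * r ^ 2 := by
    have norm_sub : ‖z - c‖ = |r| := by simpa [dist_eq_norm] using hz
    have := abs_sub_taylor_two_le hF (x := c) (h := z - c) (by simpa only [norm_sub] using hε)
    rw [norm_sub, sq_abs, add_sub_cancel] at this
    simpa only [remainder, smul_eq_mul, one_div, inv_mul_eq_div] using this
  rw [← circleAverage_remainder]
  refine abs_circleAverage_le_circleAverage_abs.trans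
    (circleAverage_mono_on_of_le_circle ?_ remainder_le)
  exact (Continuous.abs (by fun_prop)).continuousOn.circleIntegrable'

theorem intervalIntegral_integral_swap_of_isCompact {X : Type*} [TopologicalSpace X] [T2Space X]
    [SecondCountableTopology X] [MeasurableSpace X] [BorelSpace X] {μ : Measure X} [SFinite μ]
    [IsFiniteMeasureOnCompacts μ] {f : ℝ → X → ℝ} (hf : Continuous (Function.uncurry f))
    {K : Set X} (hK : IsCompact K) (hfK : ∀ t, ∀ x ∉ K, f t x = 0) (a b : ℝ) :
    ∫ t in a..b, ∫ x, f t x ∂μ = ∫ x, (∫ t in a..b, f t x) ∂μ := by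
  have support_subset : Function.support (Function.uncurry f) ⊆ univ ×ˢ K :=
    fun p hp ↦ ⟨mem_univ _, by_contra fun h ↦ hp (hfK p.1 p.2 h)⟩
  have integrableOn : IntegrableOn (Function.uncurry f) (uIoc a b ×ˢ K) (volume.prod μ) :=
    (hf.continuousOn.integrableOn_compact (isCompact_uIcc.prod hK)).mono_set
      (prod_mono_left uIoc_subset_uIcc)
  refine intervalIntegral_integral_swap
    ((integrableOn_iff_integrable_of_support_subset support_subset).1 ?_)
  rwa [IntegrableOn, ← Measure.prod_restrict, Measure.restrict_univ, Measure.prod_restrict]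

theorem integral_mul_circleAverage_comm {f g : ℂ → ℝ} (hf : Continuous f) (hg : Continuous g)
    (hg_supp : HasCompactSupport g) (r : ℝ) :
    ∫ z, f z * circleAverage g z r = ∫ z, circleAverage f z r * g z := by
  have shift (θ : ℝ) :
      ∫ z, f z * g (circleMap z r θ) = ∫ z, f (circleMap z (-r) θ) * g z := by
    rw [← integral_add_right_eq_self _ (circleMap 0 (-r) θ)]
    simp [circleMap]
  calc ∫ z, f z * circleAverage g z r
    _ = (2 * π)⁻¹ * ∫ z, ∫ θ in 0..2 * π, f z * g (circleMap z r θ) := by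
      simp only [circleAverage_def, smul_eq_mul, intervalIntegral.integral_const_mul,
        ← integral_const_mul, mul_left_comm]
    _ = (2 * π)⁻¹ * ∫ θ in 0..2 * π, ∫ z, f z * g (circleMap z r θ) := by
      congr 1
      refine (intervalIntegral_integral_swap_of_isCompact
        (by fun_prop [circleMap]) (hg_supp.isCompact.cthickening (r := |r|)) ?_ _ _).symm
      intro θ z hz
      have : circleMap z r θ ∉ tsupport g := fun h ↦
        hz (Metric.mem_cthickening_of_dist_le _ _ _ _ h
          ((dist_comm _ _).trans_le (circleMap_mem_sphere' z r θ).le))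
      rw [image_eq_zero_of_notMem_tsupport this, mul_zero]
    _ = (2 * π)⁻¹ * ∫ θ in 0..2 * π, ∫ z, f (circleMap z (-r) θ) * g z := by
      simp only [shift]
    _ = (2 * π)⁻¹ * ∫ z, ∫ θ in 0..2 * π, f (circleMap z (-r) θ) * g z := by
      rw [intervalIntegral_integral_swap_of_isCompact (by fun_prop [circleMap]) hg_supp.isCompact]
      intro t z hz
      rw [image_eq_zero_of_notMem_tsupport hz, mul_zero]
    _ = ∫ z, circleAverage f z r * g z := by
      simp only [← circleAverage_neg_radius (f := f) (R := r), circleAverage_def, smul_eq_mul,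
        intervalIntegral.integral_mul_const, ← integral_const_mul, mul_assoc]

end CircleAverage

section WeakLaplacian

theorem continuous_circleAverage_center {f : ℂ → ℝ} (hf : Continuous f) (r : ℝ) :
    Continuous fun z ↦ circleAverage f z r := by
  simp only [circleAverage_def]
  fun_prop [circleMap]

theorem continuous_laplacian {F : ℂ → ℝ} (hF : ContDiff ℝ 2 F) : Continuous (Δ F) := by
  have := (hF.fderiv_right (m := 1) (by norm_num)).continuous_fderiv one_ne_zero
  simp only [funext (laplacian_eq_fderiv_fderiv F)]
  fun_prop

theorem tsupport_laplacian_subset (F : ℂ → ℝ) : tsupport (Δ F) ⊆ tsupport F := by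
  refine closure_minimal (fun z hz ↦ ?_) (isClosed_tsupport F)
  refine tsupport_fderiv_subset ℝ (tsupport_fderiv_subset ℝ (subset_tsupport _ fun h ↦ hz ?_))
  simp [laplacian_eq_fderiv_fderiv, h]

theorem tendstoUniformly_circleAverage_sub_laplacian {F : ℂ → ℝ} (hF : ContDiff ℝ 2 F)
    (hF_supp : HasCompactSupport F) :
    TendstoUniformly (fun r z ↦ 4 / r ^ 2 * (circleAverage F z r - F z)) (Δ F) (𝓝[≠] 0) := by
  rw [Metric.tendstoUniformly_iff]
  intro ε hε
  have continuous_second := (hF.fderiv_right (m := 1) (by norm_num)).continuous_fderiv one_ne_zero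
  obtain ⟨δ, hδ, hD⟩ := (Metric.uniformContinuous_iff (f := fderiv ℝ (fderiv ℝ F))).1
    (((hF_supp.fderiv ℝ).fderiv ℝ).uniformContinuous_of_continuous continuous_second)
    (ε / 8) (by positivity)
  filter_upwards [inter_mem_nhdsWithin _ (Metric.ball_mem_nhds 0 hδ)] with r ⟨(hr : r ≠ 0), hrδ⟩ z
  have expansion := abs_circleAverage_sub_laplacian_le hF (c := z) (r := r) (ε := ε / 8)
    fun y hy ↦ (dist_eq_norm (fderiv ℝ (fderiv ℝ F) y) (fderiv ℝ (fderiv ℝ F) z)).symm.trans_le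
      (hD ((Metric.mem_closedBall.1 hy).trans_lt (by simpa using hrδ))).le
  calc dist (Δ F z) (4 / r ^ 2 * (circleAverage F z r - F z))
    _ = 4 / r ^ 2 * |circleAverage F z r - F z - r ^ 2 / 4 * Δ F z| := by
      rw [dist_comm, Real.dist_eq, ← abs_of_pos (show 0 < 4 / r ^ 2 by positivity), ← abs_mul,
        abs_of_pos (show 0 < 4 / r ^ 2 by positivity)]
      congr 1
      field_simp
    _ ≤ 4 / r ^ 2 * (ε / 8 * r ^ 2) := by gcongr
    _ < ε := by field_simp; linarith

theorem support_circleAverage_subset_cthickening (F : ℂ → ℝ) (r : ℝ) :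
    Function.support (fun z ↦ circleAverage F z r) ⊆ Metric.cthickening |r| (tsupport F) := by
  intro z hz
  by_contra hzF
  refine hz (circleAverage_const_on_circle fun y hy ↦
    image_eq_zero_of_notMem_tsupport fun h ↦ hzF ?_)
  exact Metric.mem_cthickening_of_dist_le z y _ _ h ((dist_comm z y).trans_le hy.le)

theorem hasCompactSupport_circleAverage {F : ℂ → ℝ} (hF : HasCompactSupport F) (r : ℝ) :
    HasCompactSupport fun z ↦ circleAverage F z r :=
  .of_support_subset_isCompact hF.isCompact.cthickening
    (support_circleAverage_subset_cthickening F r)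

theorem tendsto_integral_mul_circleAverage_sub {W F : ℂ → ℝ} (hW : Continuous W)
    (hF : ContDiff ℝ 2 F) (hF_supp : HasCompactSupport F) :
    Tendsto (fun r ↦ ∫ z, W z * (4 / r ^ 2 * (circleAverage F z r - F z))) (𝓝[≠] 0)
      (𝓝 (∫ z, W z * Δ F z)) := by
  have unif := tendstoUniformly_circleAverage_sub_laplacian hF hF_supp
  let K := Metric.cthickening 1 (tsupport F)
  have hK : IsCompact K := hF_supp.isCompact.cthickening
  have cont_bound : Continuous fun z ↦ |W z| * (|Δ F z| + 1) := by
    have := continuous_laplacian hF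
    fun_prop
  refine tendsto_integral_filter_of_dominated_convergence
    (K.indicator fun z ↦ |W z| * (|Δ F z| + 1)) (.of_forall fun r ↦ ?_) ?_
    ((integrable_indicator_iff hK.measurableSet).2
      (cont_bound.continuousOn.integrableOn_compact hK))
    (.of_forall fun z ↦ (unif.tendsto_at z).const_mul (W z))
  · have := continuous_circleAverage_center hF.continuous r
    have := hF.continuous
    exact Continuous.aestronglyMeasurable (by fun_prop)
  · filter_upwards [Metric.tendstoUniformly_iff.1 unif 1 one_pos,
      mem_nhdsWithin_of_mem_nhds (Metric.closedBall_mem_nhds 0 one_pos)] with r hunif hr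
    refine .of_forall fun z ↦ ?_
    rw [norm_mul]
    by_cases hz : z ∈ K
    · rw [indicator_of_mem hz]
      gcongr
      · exact le_rfl
      · have := hunif z
        rw [dist_comm, dist_eq_norm] at this
        exact (norm_le_norm_add_norm_sub' _ _).trans (by gcongr; exact le_rfl)
    · have avg_zero : circleAverage F z r = 0 := Function.notMem_support.1 fun h ↦ hz <|
        Metric.cthickening_mono (by simpa using hr) _
          (support_circleAverage_subset_cthickening F r h)
      have F_zero : F z = 0 := image_eq_zero_of_notMem_tsupport fun h ↦
        hz (Metric.self_subset_cthickening _ h)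
      simp [indicator_of_notMem hz, avg_zero, F_zero]

theorem integral_mul_laplacian_nonneg_of_le_circleAverage {W F : ℂ → ℝ} (hW : Continuous W)
    (hF : ContDiff ℝ 2 F) (hF_supp : HasCompactSupport F) (hF_nonneg : 0 ≤ F)
    (hmean : ∀ᶠ r in 𝓝[>] 0, ∀ z ∈ tsupport F, W z ≤ circleAverage W z r) :
    0 ≤ ∫ z, W z * Δ F z := by
  have limit := (tendsto_integral_mul_circleAverage_sub hW hF hF_supp).mono_left
    (nhdsWithin_mono 0 fun _ hr ↦ ne_of_gt hr : 𝓝[>] (0 : ℝ) ≤ 𝓝[≠] 0)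
  refine ge_of_tendsto limit ?_
  filter_upwards [hmean] with r hr
  have := continuous_circleAverage_center hF.continuous r
  have := continuous_circleAverage_center hW r
  have cont_F := hF.continuous
  calc 0 ≤ 4 / r ^ 2 * ∫ z, (circleAverage W z r - W z) * F z := by
        refine mul_nonneg (by positivity) (integral_nonneg fun z ↦ ?_)
        by_cases hz : z ∈ tsupport F
        · exact mul_nonneg (sub_nonneg.2 (hr z hz)) (hF_nonneg z)
        · simp [image_eq_zero_of_notMem_tsupport hz]
    _ = 4 / r ^ 2 * ((∫ z, W z * circleAverage F z r) - ∫ z, W z * F z) := by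
        rw [integral_mul_circleAverage_comm hW hF.continuous hF_supp, ← integral_sub]
        · simp only [sub_mul]
        all_goals exact Continuous.integrable_of_hasCompactSupport (by fun_prop) hF_supp.mul_left
    _ = ∫ z, W z * (4 / r ^ 2 * (circleAverage F z r - F z)) := by
        rw [← integral_sub, ← integral_const_mul]
        · congr with z
          ring
        · exact Continuous.integrable_of_hasCompactSupport (by fun_prop)
            (hasCompactSupport_circleAverage hF_supp r).mul_left
        · exact Continuous.integrable_of_hasCompactSupport (by fun_prop) hF_supp.mul_left

theorem Subharmonic.integral_mul_laplacian_nonneg {U : Set ℂ} {w F : ℂ → ℝ} (hw : Subharmonic U w)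
    (hU : IsOpen U) (hF : ContDiff ℝ 2 F) (hF_supp : HasCompactSupport F) (hF_nonneg : 0 ≤ F)
    (hFU : tsupport F ⊆ U) : 0 ≤ ∫ z, w z * Δ F z := by
  obtain ⟨δ, hδ, hδU⟩ := hF_supp.isCompact.exists_cthickening_subset_open hU hFU
  obtain ⟨κ, hκ_one, -, hκU, -⟩ := exists_continuousMap_one_of_isCompact_subset_isOpen
    (hF_supp.isCompact.cthickening (r := δ)) hU hδU
  have eq_on {z : ℂ} (hz : z ∈ Metric.cthickening δ (tsupport F)) : κ z * w z = w z := by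
    rw [hκ_one hz, Pi.one_apply, one_mul]
  have cont : Continuous fun z ↦ κ z * w z :=
    (κ.continuous.continuousOn.mul hw.1).continuous_of_tsupport_subset hU
      ((tsupport_mul_subset_left).trans hκU)
  have nonneg : 0 ≤ ∫ z, κ z * w z * Δ F z := by
    refine integral_mul_laplacian_nonneg_of_le_circleAverage cont hF hF_supp hF_nonneg ?_
    filter_upwards [Ioc_mem_nhdsGT hδ] with r hr z hz
    have ball_subset : Metric.closedBall z r ⊆ Metric.cthickening δ (tsupport F) :=
      (Metric.closedBall_subset_closedBall hr.2).trans (Metric.closedBall_subset_cthickening hz δ)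
    rw [eq_on (ball_subset (Metric.mem_closedBall_self hr.1.le)),
      circleAverage_congr_sphere (f₂ := w) fun y hy ↦ eq_on
        (ball_subset (Metric.sphere_subset_closedBall (by rwa [abs_of_pos hr.1] at hy)))]
    exact hw.2 z r hr.1 (ball_subset.trans hδU)
  refine nonneg.trans_eq (integral_congr_ae (.of_forall fun z ↦ ?_))
  by_cases hz : z ∈ tsupport F
  · simp only [eq_on (Metric.self_subset_cthickening _ hz)]
  · simp only [image_eq_zero_of_notMem_tsupport (mt (tsupport_laplacian_subset F ·) hz), mul_zero]

end WeakLaplacian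

section HalfLineIntegral

variable {E : Type*} [NormedAddCommGroup E] [NormedSpace ℝ E] [CompleteSpace E]

theorem hasDerivAt_integral_Iic {ψ : ℝ → E} (hψ : Continuous ψ)
    (hψ_int : Integrable ψ) (y : ℝ) :
    HasDerivAt (fun y ↦ ∫ s in Iic y, ψ s) (ψ y) y := by
  have split : (fun y ↦ ∫ s in Iic y, ψ s) = fun y ↦ (∫ s in Iic 0, ψ s) + ∫ s in 0..y, ψ s := by
    funext y
    rw [← intervalIntegral.integral_Iic_sub_Iic hψ_int.integrableOn hψ_int.integrableOn,
      add_sub_cancel]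
  rw [split]
  exact (hψ.integral_hasStrictDerivAt 0 y).hasDerivAt.const_add _

theorem hasDerivAt_integral_Ioi {ψ : ℝ → E} (hψ : Continuous ψ)
    (hψ_int : Integrable ψ) (y : ℝ) :
    HasDerivAt (fun y ↦ ∫ s in Ioi y, ψ s) (-ψ y) y := by
  have split : (fun y ↦ ∫ s in Ioi y, ψ s) = fun y ↦ (∫ s, ψ s) - ∫ s in Iic y, ψ s := by
    funext y
    rw [← intervalIntegral.integral_Iic_add_Ioi hψ_int.integrableOn hψ_int.integrableOn,
      add_sub_cancel_left]
  rw [split]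
  exact (hasDerivAt_integral_Iic hψ hψ_int y).const_sub _

end HalfLineIntegral

section GreenPotential

theorem integral_exp_neg_mul_abs {b : ℝ} (hb : 0 < b) : ∫ y : ℝ, exp (-(b * |y|)) = 2 / b := by
  have := integral_exp_mul_Ioi (neg_lt_zero.2 hb) 0
  simp only [neg_mul, mul_zero, exp_zero, neg_div_neg_eq] at this
  rw [integral_comp_abs (f := fun y ↦ exp (-(b * y))), this, mul_one_div]

theorem integrable_exp_neg_mul_abs {b : ℝ} (hb : 0 < b) :
    Integrable fun y : ℝ ↦ exp (-(b * |y|)) :=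
  .of_integral_ne_zero (by rw [integral_exp_neg_mul_abs hb]; positivity)

/-- The decaying solution `g` of `g'' - b² g = -2 b φ` on the line, for `b > 0`. -/
noncomputable def greenPotential (b : ℝ) (φ : ℝ → ℝ) (y : ℝ) : ℝ :=
  ∫ s, φ s * exp (-(b * |y - s|))

/-- The contribution to `greenPotential b φ y` of the points to the left of `y`. -/
noncomputable def leftPotential (b : ℝ) (φ : ℝ → ℝ) (y : ℝ) : ℝ :=
  exp (-(b * y)) * ∫ s in Iic y, φ s * exp (b * s)

/-- The contribution to `greenPotential b φ y` of the points to the right of `y`. -/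
noncomputable def rightPotential (b : ℝ) (φ : ℝ → ℝ) (y : ℝ) : ℝ :=
  exp (b * y) * ∫ s in Ioi y, φ s * exp (-(b * s))

variable {φ : ℝ → ℝ}

theorem hasDerivAt_leftPotential (hφ : Continuous φ) (hφ_supp : HasCompactSupport φ) (b y : ℝ) :
    HasDerivAt (leftPotential b φ) (φ y - b * leftPotential b φ y) y := by
  have hψ : Continuous fun s ↦ φ s * exp (b * s) := by fun_prop
  have hexp : HasDerivAt (fun y ↦ exp (-(b * y))) (exp (-(b * y)) * -(b * 1)) y :=
    ((hasDerivAt_id y).const_mul b).neg.exp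
  refine (hexp.mul (hasDerivAt_integral_Iic hψ
    (hψ.integrable_of_hasCompactSupport hφ_supp.mul_right) y)).congr_deriv ?_
  rw [leftPotential, exp_neg]
  field_simp
  ring

theorem hasDerivAt_rightPotential (hφ : Continuous φ) (hφ_supp : HasCompactSupport φ) (b y : ℝ) :
    HasDerivAt (rightPotential b φ) (b * rightPotential b φ y - φ y) y := by
  have hψ : Continuous fun s ↦ φ s * exp (-(b * s)) := by fun_prop
  have hexp : HasDerivAt (fun y ↦ exp (b * y)) (exp (b * y) * (b * 1)) y :=
    ((hasDerivAt_id y).const_mul b).exp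
  refine (hexp.mul (hasDerivAt_integral_Ioi hψ
    (hψ.integrable_of_hasCompactSupport hφ_supp.mul_right) y)).congr_deriv ?_
  rw [rightPotential, exp_neg]
  field_simp
  ring

theorem greenPotential_eq_left_add_right (hφ : Continuous φ) (hφ_supp : HasCompactSupport φ)
    (b : ℝ) : greenPotential b φ = leftPotential b φ + rightPotential b φ := by
  funext y
  have hint : Integrable fun s ↦ φ s * exp (-(b * |y - s|)) :=
    Continuous.integrable_of_hasCompactSupport (by fun_prop) hφ_supp.mul_right
  rw [greenPotential, ← intervalIntegral.integral_Iic_add_Ioi (b := y) hint.integrableOn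
    hint.integrableOn, Pi.add_apply, leftPotential, rightPotential,
    ← integral_const_mul, ← integral_const_mul]
  congr 1
  · refine setIntegral_congr_fun measurableSet_Iic fun s hs ↦ ?_
    simp only [abs_of_nonneg (sub_nonneg.2 (mem_Iic.1 hs)), mul_left_comm _ (φ s), ← exp_add]
    ring_nf
  · refine setIntegral_congr_fun measurableSet_Ioi fun s hs ↦ ?_
    simp only [abs_of_neg (sub_neg.2 (mem_Ioi.1 hs)), mul_left_comm _ (φ s), ← exp_add]
    ring_nf

theorem hasDerivAt_greenPotential (hφ : Continuous φ) (hφ_supp : HasCompactSupport φ) (b y : ℝ) :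
    HasDerivAt (greenPotential b φ) (b * (rightPotential b φ y - leftPotential b φ y)) y := by
  rw [greenPotential_eq_left_add_right hφ hφ_supp]
  refine ((hasDerivAt_leftPotential hφ hφ_supp b y).add
    (hasDerivAt_rightPotential hφ hφ_supp b y)).congr_deriv ?_
  ring

theorem deriv_greenPotential (hφ : Continuous φ) (hφ_supp : HasCompactSupport φ) (b : ℝ) :
    deriv (greenPotential b φ) = fun y ↦ b * (rightPotential b φ y - leftPotential b φ y) :=
  funext fun y ↦ (hasDerivAt_greenPotential hφ hφ_supp b y).deriv

theorem hasDerivAt_deriv_greenPotential (hφ : Continuous φ) (hφ_supp : HasCompactSupport φ)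
    (b y : ℝ) :
    HasDerivAt (deriv (greenPotential b φ)) (b ^ 2 * greenPotential b φ y - 2 * b * φ y) y := by
  rw [deriv_greenPotential hφ hφ_supp, greenPotential_eq_left_add_right hφ hφ_supp, Pi.add_apply]
  refine (((hasDerivAt_rightPotential hφ hφ_supp b y).sub
    (hasDerivAt_leftPotential hφ hφ_supp b y)).const_mul b).congr_deriv ?_
  ring

theorem deriv_deriv_greenPotential (hφ : Continuous φ) (hφ_supp : HasCompactSupport φ) (b : ℝ) :
    deriv (deriv (greenPotential b φ)) = fun y ↦ b ^ 2 * greenPotential b φ y - 2 * b * φ y :=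
  funext fun y ↦ (hasDerivAt_deriv_greenPotential hφ hφ_supp b y).deriv

theorem contDiff_two_greenPotential (hφ : Continuous φ) (hφ_supp : HasCompactSupport φ) (b : ℝ) :
    ContDiff ℝ 2 (greenPotential b φ) := by
  have differentiable : Differentiable ℝ (greenPotential b φ) := fun y ↦
    (hasDerivAt_greenPotential hφ hφ_supp b y).differentiableAt
  have continuous := differentiable.continuous
  refine (contDiff_succ_iff_deriv (n := 1)).2 ⟨differentiable, by simp, contDiff_one_iff_deriv.2
    ⟨fun y ↦ (hasDerivAt_deriv_greenPotential hφ hφ_supp b y).differentiableAt, ?_⟩⟩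
  rw [deriv_deriv_greenPotential hφ hφ_supp]
  fun_prop

theorem abs_deriv_greenPotential_le (hφ : Continuous φ) (hφ_supp : HasCompactSupport φ)
    (hφ_nonneg : 0 ≤ φ) {b : ℝ} (hb : 0 ≤ b) (y : ℝ) :
    |deriv (greenPotential b φ) y| ≤ b * greenPotential b φ y := by
  have left_nonneg : 0 ≤ leftPotential b φ y :=
    mul_nonneg (exp_pos _).le (integral_nonneg fun s ↦ mul_nonneg (hφ_nonneg s) (exp_pos _).le)
  have right_nonneg : 0 ≤ rightPotential b φ y :=
    mul_nonneg (exp_pos _).le (integral_nonneg fun s ↦ mul_nonneg (hφ_nonneg s) (exp_pos _).le)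
  rw [deriv_greenPotential hφ hφ_supp, greenPotential_eq_left_add_right hφ hφ_supp, Pi.add_apply,
    abs_mul, abs_of_nonneg hb]
  gcongr
  exact abs_le.2 ⟨by linarith, by linarith⟩

theorem greenPotential_nonneg (hφ_nonneg : 0 ≤ φ) (b y : ℝ) : 0 ≤ greenPotential b φ y :=
  integral_nonneg fun s ↦ mul_nonneg (hφ_nonneg s) (exp_pos _).le

theorem greenPotential_le_integral (hφ : Integrable φ) (hφ_nonneg : 0 ≤ φ) {b : ℝ} (hb : 0 ≤ b)
    (y : ℝ) : greenPotential b φ y ≤ ∫ s, φ s := by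
  refine integral_mono_of_nonneg
    (.of_forall fun s ↦ mul_nonneg (hφ_nonneg s) (exp_pos _).le) hφ (.of_forall fun s ↦ ?_)
  exact mul_le_of_le_one_right (hφ_nonneg s) (exp_le_one_iff.2 (neg_nonpos.2 (by positivity)))

theorem integrable_greenPotential (hφ : Integrable φ) {b : ℝ} (hb : 0 < b) :
    Integrable (greenPotential b φ) :=
  hφ.integrable_convolution (ContinuousLinearMap.mul ℝ ℝ) (integrable_exp_neg_mul_abs hb)

theorem integral_greenPotential (hφ : Integrable φ) {b : ℝ} (hb : 0 < b) :
    ∫ y, greenPotential b φ y = 2 / b * ∫ s, φ s := by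
  refine (integral_convolution (ContinuousLinearMap.mul ℝ ℝ) hφ
    (integrable_exp_neg_mul_abs hb)).trans ?_
  rw [integral_exp_neg_mul_abs hb, ContinuousLinearMap.mul_apply', mul_comm]

end GreenPotential

section SeparatedVariables

variable {f h : ℝ → ℝ}

theorem hasFDerivAt_re_mul_im (hf : Differentiable ℝ f) (hh : Differentiable ℝ h) (z : ℂ) :
    HasFDerivAt (fun z : ℂ ↦ f z.re * h z.im)
      ((deriv f z.re * h z.im) • Complex.reCLM + (f z.re * deriv h z.im) • Complex.imCLM) z := by
  have hf' := (hf z.re).hasDerivAt.comp_hasFDerivAt z Complex.reCLM.hasFDerivAt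
  have hh' := (hh z.im).hasDerivAt.comp_hasFDerivAt z Complex.imCLM.hasFDerivAt
  refine (hf'.mul hh').congr_fderiv ?_
  simp only [Function.comp_apply, smul_smul]
  rw [add_comm, mul_comm (h _)]

theorem laplacian_re_mul_im (hf : ContDiff ℝ 2 f) (hh : ContDiff ℝ 2 h) (z : ℂ) :
    Δ (fun z : ℂ ↦ f z.re * h z.im) z =
      deriv (deriv f) z.re * h z.im + f z.re * deriv (deriv h) z.im := by
  have hf₁ := hf.differentiable two_ne_zero
  have hh₁ := hh.differentiable two_ne_zero
  have hf₂ : Differentiable ℝ (deriv f) := hf.differentiable_deriv_two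
  have hh₂ : Differentiable ℝ (deriv h) := hh.differentiable_deriv_two
  have second := ((hasFDerivAt_re_mul_im hf₂ hh₁ z).smul_const Complex.reCLM).fun_add
    ((hasFDerivAt_re_mul_im hf₁ hh₂ z).smul_const Complex.imCLM)
  rw [laplacian_eq_fderiv_fderiv, funext fun z ↦ (hasFDerivAt_re_mul_im hf₁ hh₁ z).fderiv,
    second.fderiv]
  simp

theorem integral_re_mul_im (f h : ℝ → ℝ) :
    ∫ z : ℂ, f z.re * h z.im = (∫ x, f x) * ∫ y, h y := by
  rw [← Complex.volume_preserving_equiv_real_prod.symm.integral_comp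
    Complex.measurableEquivRealProd.symm.measurableEmbedding]
  exact integral_prod_mul f h

theorem integrable_re_mul_im (hf : Integrable f) (hh : Integrable h) :
    Integrable fun z : ℂ ↦ f z.re * h z.im :=
  Complex.volume_preserving_equiv_real_prod.integrable_comp_of_integrable (hf.mul_prod hh)

theorem integral_complex_eq_iterated {Φ : ℂ → ℝ} (hΦ : Integrable Φ) :
    ∫ z, Φ z = ∫ y : ℝ, ∫ x : ℝ, Φ (x + y * Complex.I) := by
  rw [← Complex.volume_preserving_equiv_real_prod.symm.integral_comp
    Complex.measurableEquivRealProd.symm.measurableEmbedding]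
  have hΦ' := Complex.volume_preserving_equiv_real_prod.symm.integrable_comp_of_integrable hΦ
  refine (integral_prod_symm _ hΦ').trans ?_
  simp [Complex.mk_eq_add_mul_I]

theorem tsupport_re_mul_im_subset (f h : ℝ → ℝ) :
    tsupport (fun z : ℂ ↦ f z.re * h z.im) ⊆ tsupport f ×ℂ tsupport h := by
  refine closure_minimal (fun z hz ↦ ?_) ?_
  · exact ⟨subset_tsupport f (left_ne_zero_of_mul hz), subset_tsupport h (right_ne_zero_of_mul hz)⟩
  · exact (isClosed_tsupport f).reProdIm (isClosed_tsupport h)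

theorem hasCompactSupport_re_mul_im (hf : HasCompactSupport f) (hh : HasCompactSupport h) :
    HasCompactSupport fun z : ℂ ↦ f z.re * h z.im :=
  (hf.isCompact.reProdIm hh.isCompact).of_isClosed_subset (isClosed_tsupport _)
    (tsupport_re_mul_im_subset f h)

theorem deriv_deriv_mul (hf : ContDiff ℝ 2 f) (hh : ContDiff ℝ 2 h) (x : ℝ) :
    deriv (deriv fun x ↦ f x * h x) x =
      deriv (deriv f) x * h x + 2 * (deriv f x * deriv h x) + f x * deriv (deriv h) x := by
  have hf₁ := hf.differentiable two_ne_zero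
  have hh₁ := hh.differentiable two_ne_zero
  have first : deriv (fun x ↦ f x * h x) = fun x ↦ deriv f x * h x + f x * deriv h x :=
    funext fun x ↦ ((hf₁ x).hasDerivAt.mul (hh₁ x).hasDerivAt).deriv
  rw [first]
  refine ((((hf.differentiable_deriv_two x).hasDerivAt.mul (hh₁ x).hasDerivAt).add
    ((hf₁ x).hasDerivAt.mul (hh.differentiable_deriv_two x).hasDerivAt)).deriv).trans ?_
  ring

end SeparatedVariables

section TestFunction

/-- The size of the 2-jet of `f` at `x`, in which errors coming from cutoffs are measured. -/
noncomputable def jetNorm (f : ℝ → ℝ) (x : ℝ) : ℝ :=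
  |f x| + |deriv f x| + |deriv (deriv f) x|

theorem continuous_jetNorm {f : ℝ → ℝ} (hf : ContDiff ℝ 2 f) : Continuous (jetNorm f) := by
  have := hf.continuous
  have := hf.continuous_deriv one_le_two
  have : Continuous (deriv (deriv f)) := (hf.iterate_deriv' 0 2).continuous
  unfold jetNorm
  fun_prop

theorem hasCompactSupport_jetNorm {f : ℝ → ℝ} (hf : HasCompactSupport f) :
    HasCompactSupport (jetNorm f) :=
  (hf.abs.add hf.deriv.abs).add hf.deriv.deriv.abs

theorem integrable_jetNorm {f : ℝ → ℝ} (hf : ContDiff ℝ 2 f) (hf_supp : HasCompactSupport f) :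
    Integrable (jetNorm f) :=
  (continuous_jetNorm hf).integrable_of_hasCompactSupport (hasCompactSupport_jetNorm hf_supp)

theorem jetNorm_nonneg (f : ℝ → ℝ) (x : ℝ) : 0 ≤ jetNorm f x := by
  unfold jetNorm
  positivity

variable {χ η φ : ℝ → ℝ}

/-- Nonnegative compactly supported `C²` functions: the cutoffs multiplied into test functions, and
the functions a subharmonic function may be tested against. -/
structure IsCutoff {E : Type*} [NormedAddCommGroup E] [NormedSpace ℝ E] (f : E → ℝ) : Prop where
  contDiff : ContDiff ℝ 2 f
  hasCompactSupport : HasCompactSupport f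
  nonneg : 0 ≤ f

/-- The test function `χ(x) η(y) (∫ φ + cos (a x + θ) g(y))`, where `g` is the Green potential of
`φ`. The summand `∫ φ ≥ g` makes it nonnegative, while `g` makes its Laplacian equal to
`-2 |a| χ(x) cos (a x + θ) η(y) φ(y)` up to terms containing derivatives of the cutoffs. -/
noncomputable def testFunction (χ η φ : ℝ → ℝ) (a θ : ℝ) (z : ℂ) : ℝ :=
  χ z.re * η z.im * ((∫ s, φ s) + cos (a * z.re + θ) * greenPotential |a| φ z.im)

theorem testFunction_nonneg (hχ : 0 ≤ χ) (hη : 0 ≤ η) (hφ : 0 ≤ φ) (hφ_int : Integrable φ)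
    (a θ : ℝ) : 0 ≤ testFunction χ η φ a θ := by
  intro z
  refine mul_nonneg (mul_nonneg (hχ _) (hη _)) ?_
  have := greenPotential_le_integral hφ_int hφ (abs_nonneg a) z.im
  have := greenPotential_nonneg hφ |a| z.im
  nlinarith [neg_one_le_cos (a * z.re + θ)]

theorem contDiff_testFunction (hχ : ContDiff ℝ 2 χ) (hη : ContDiff ℝ 2 η) (hφ : Continuous φ)
    (hφ_supp : HasCompactSupport φ) (a θ : ℝ) : ContDiff ℝ 2 (testFunction χ η φ a θ) := by
  have hre : ContDiff ℝ 2 Complex.re := Complex.reCLM.contDiff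
  have him : ContDiff ℝ 2 Complex.im := Complex.imCLM.contDiff
  have hg := contDiff_two_greenPotential hφ hφ_supp |a|
  unfold testFunction
  fun_prop

theorem tsupport_testFunction_subset (χ η φ : ℝ → ℝ) (a θ : ℝ) :
    tsupport (testFunction χ η φ a θ) ⊆ tsupport χ ×ℂ tsupport η :=
  (tsupport_mul_subset_left ..).trans (tsupport_re_mul_im_subset χ η)

theorem hasCompactSupport_testFunction (hχ : HasCompactSupport χ) (hη : HasCompactSupport η)
    (φ : ℝ → ℝ) (a θ : ℝ) : HasCompactSupport (testFunction χ η φ a θ) :=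
  (hasCompactSupport_re_mul_im hχ hη).mul_right

theorem isCutoff_testFunction (hχ : IsCutoff χ) (hη : IsCutoff η) (hφ : Continuous φ)
    (hφ_supp : HasCompactSupport φ) (hφ_nonneg : 0 ≤ φ) (a θ : ℝ) :
    IsCutoff (testFunction χ η φ a θ) where
  contDiff := contDiff_testFunction hχ.contDiff hη.contDiff hφ hφ_supp a θ
  hasCompactSupport :=
    hasCompactSupport_testFunction hχ.hasCompactSupport hη.hasCompactSupport φ a θ
  nonneg := testFunction_nonneg hχ.nonneg hη.nonneg hφ_nonneg
    (hφ.integrable_of_hasCompactSupport hφ_supp) a θ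

theorem deriv_deriv_mul_cos (hχ : ContDiff ℝ 2 χ) (a θ x : ℝ) :
    deriv (deriv fun x ↦ χ x * cos (a * x + θ)) x =
      deriv (deriv χ) x * cos (a * x + θ) - 2 * a * (deriv χ x * sin (a * x + θ))
        - a ^ 2 * (χ x * cos (a * x + θ)) := by
  have hlin (x : ℝ) : HasDerivAt (fun x ↦ a * x + θ) a x := by
    simpa using ((hasDerivAt_id x).const_mul a).add_const θ
  have hcos : deriv (fun x ↦ cos (a * x + θ)) = fun x ↦ -sin (a * x + θ) * a :=
    funext fun x ↦ (hlin x).cos.deriv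
  have hcos₂ : deriv (deriv fun x ↦ cos (a * x + θ)) x = -(cos (a * x + θ) * a) * a := by
    rw [hcos]
    exact ((hlin x).sin.neg.mul_const a).deriv
  rw [deriv_deriv_mul hχ (by fun_prop), hcos₂, hcos]
  ring

theorem laplacian_testFunction (hχ : ContDiff ℝ 2 χ) (hη : ContDiff ℝ 2 η) (hφ : Continuous φ)
    (hφ_supp : HasCompactSupport φ) (a θ : ℝ) (z : ℂ) :
    Δ (testFunction χ η φ a θ) z =
      (deriv (deriv χ) z.re * η z.im + χ z.re * deriv (deriv η) z.im) *
          ((∫ s, φ s) + cos (a * z.re + θ) * greenPotential |a| φ z.im)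
        - 2 * a * (deriv χ z.re * sin (a * z.re + θ) * η z.im * greenPotential |a| φ z.im)
        + 2 * (χ z.re * cos (a * z.re + θ) * deriv η z.im * deriv (greenPotential |a| φ) z.im)
        - 2 * |a| * (χ z.re * η z.im * (cos (a * z.re + θ) * φ z.im)) := by
  have hg := contDiff_two_greenPotential hφ hφ_supp |a|
  have hηg : ContDiff ℝ 2 fun y ↦ η y * greenPotential |a| φ y := hη.mul hg
  have hχcos : ContDiff ℝ 2 fun x ↦ χ x * cos (a * x + θ) := by fun_prop
  have hKη : ContDiff ℝ 2 fun y ↦ (∫ s, φ s) * η y := by fun_prop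
  have split : testFunction χ η φ a θ = (fun z ↦ χ z.re * ((∫ s, φ s) * η z.im)) +
      fun z ↦ χ z.re * cos (a * z.re + θ) * (η z.im * greenPotential |a| φ z.im) := by
    funext z
    simp only [testFunction, Pi.add_apply]
    ring
  have hre : ContDiff ℝ 2 Complex.re := Complex.reCLM.contDiff
  have him : ContDiff ℝ 2 Complex.im := Complex.imCLM.contDiff
  rw [split, ContDiffAt.laplacian_add (by fun_prop) (by fun_prop), laplacian_re_mul_im hχ hKη,
    laplacian_re_mul_im hχcos hηg, deriv_deriv_mul_cos hχ, deriv_deriv_mul hη hg,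
    deriv_deriv_greenPotential hφ hφ_supp]
  simp only [deriv_const_mul_field', sq_abs]
  ring

theorem abs_deriv_deriv_mul_add_le (χ η : ℝ → ℝ) (x y : ℝ) :
    |deriv (deriv χ) x * η y + χ x * deriv (deriv η) y| ≤ jetNorm χ x * jetNorm η y := by
  refine (abs_add_le _ _).trans ?_
  rw [abs_mul, abs_mul, jetNorm, jetNorm, ← sub_nonneg]
  ring_nf
  positivity

theorem abs_deriv_mul_add_le (χ η : ℝ → ℝ) (x y : ℝ) :
    |deriv χ x| * |η y| + |χ x| * |deriv η y| ≤ jetNorm χ x * jetNorm η y := by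
  rw [jetNorm, jetNorm, ← sub_nonneg]
  ring_nf
  positivity

theorem abs_laplacian_testFunction_add_le (hχ : ContDiff ℝ 2 χ) (hη : ContDiff ℝ 2 η)
    (hφ : Continuous φ) (hφ_supp : HasCompactSupport φ) (hφ_nonneg : 0 ≤ φ) (a θ : ℝ) (z : ℂ) :
    |Δ (testFunction χ η φ a θ) z +
        2 * |a| * (χ z.re * η z.im * (cos (a * z.re + θ) * φ z.im))| ≤
      2 * jetNorm χ z.re *
        (jetNorm η z.im * ((∫ s, φ s) + |a| * greenPotential |a| φ z.im)) := by
  rw [laplacian_testFunction hχ hη hφ hφ_supp, sub_add_cancel]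
  have hg := greenPotential_nonneg hφ_nonneg |a| z.im
  have hgK := greenPotential_le_integral
    (hφ.integrable_of_hasCompactSupport hφ_supp) hφ_nonneg (abs_nonneg a) z.im
  have hg' := abs_deriv_greenPotential_le hφ hφ_supp hφ_nonneg (abs_nonneg a) z.im
  have hcos := abs_cos_le_one (a * z.re + θ)
  have hsin := abs_sin_le_one (a * z.re + θ)
  set K := ∫ s, φ s
  set g := greenPotential |a| φ z.im
  set g' := deriv (greenPotential |a| φ) z.im
  have height_le : |K + cos (a * z.re + θ) * g| ≤ 2 * K := by
    rw [abs_le] at hcos ⊢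
    constructor <;> nlinarith
  have second_order_le :
      |(deriv (deriv χ) z.re * η z.im + χ z.re * deriv (deriv η) z.im) *
          (K + cos (a * z.re + θ) * g)| ≤ jetNorm χ z.re * jetNorm η z.im * (2 * K) := by
    rw [abs_mul]
    exact mul_le_mul (abs_deriv_deriv_mul_add_le ..) height_le (abs_nonneg _)
      (mul_nonneg (jetNorm_nonneg ..) (jetNorm_nonneg ..))
  have χ_cross_le : |2 * a * (deriv χ z.re * sin (a * z.re + θ) * η z.im * g)| ≤
      2 * |a| * (|deriv χ z.re| * 1 * |η z.im| * g) := by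
    simp only [abs_mul, abs_two, abs_of_nonneg hg]
    gcongr
  have η_cross_le : |2 * (χ z.re * cos (a * z.re + θ) * deriv η z.im * g')| ≤
      2 * (|χ z.re| * 1 * |deriv η z.im| * (|a| * g)) := by
    simp only [abs_mul, abs_two]
    gcongr
  have first_order_le := mul_le_mul_of_nonneg_right
    (abs_deriv_mul_add_le χ η z.re z.im) (mul_nonneg (abs_nonneg a) hg)
  refine (abs_add_le _ _).trans ((add_le_add_left (abs_sub _ _) _).trans ?_)
  linarith

theorem integral_jetNorm_mul_le (hη : ContDiff ℝ 2 η) (hη_supp : HasCompactSupport η)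
    (hφ : Integrable φ) (hφ_nonneg : 0 ≤ φ) {M b : ℝ} (hM : ∀ y, jetNorm η y ≤ M) (hb : 0 < b) :
    ∫ y, jetNorm η y * ((∫ s, φ s) + b * greenPotential b φ y) ≤
      ((∫ y, jetNorm η y) + 2 * M) * ∫ s, φ s := by
  have hj := integrable_jetNorm hη hη_supp
  have hg := integrable_greenPotential hφ hb
  calc ∫ y, jetNorm η y * ((∫ s, φ s) + b * greenPotential b φ y)
    _ ≤ ∫ y, (jetNorm η y * (∫ s, φ s) + M * b * greenPotential b φ y) := by
      refine integral_mono_of_nonneg (.of_forall fun y ↦ ?_)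
        ((hj.mul_const _).add (hg.const_mul _)) (.of_forall fun y ↦ ?_)
      · have := greenPotential_nonneg hφ_nonneg b y
        have := integral_nonneg (μ := volume) hφ_nonneg
        exact mul_nonneg (jetNorm_nonneg η y) (by positivity)
      · dsimp only
        rw [mul_add, mul_assoc M]
        have := greenPotential_nonneg hφ_nonneg b y
        gcongr
        exact hM y
    _ = ((∫ y, jetNorm η y) + 2 * M) * ∫ s, φ s := by
      rw [integral_add (hj.mul_const _) (hg.const_mul _), integral_mul_const, integral_const_mul,
        integral_greenPotential hφ hb]
      field_simp

theorem integrable_jetNorm_re_mul_jetNorm_im (hχ : IsCutoff χ) (hη : IsCutoff η)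
    (hφ : Continuous φ) (hφ_supp : HasCompactSupport φ) (b : ℝ) :
    Integrable fun z : ℂ ↦ 2 * jetNorm χ z.re *
      (jetNorm η z.im * ((∫ s, φ s) + b * greenPotential b φ z.im)) := by
  refine integrable_re_mul_im
    ((integrable_jetNorm hχ.contDiff hχ.hasCompactSupport).const_mul 2)
    (h := fun y ↦ jetNorm η y * ((∫ s, φ s) + b * greenPotential b φ y)) ?_
  have := continuous_jetNorm hη.contDiff
  have := (contDiff_two_greenPotential hφ hφ_supp b).continuous
  exact Continuous.integrable_of_hasCompactSupport (by fun_prop)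
    (hasCompactSupport_jetNorm hη.hasCompactSupport).mul_right

theorem integral_jetNorm_re_mul_jetNorm_im_le (χ : ℝ → ℝ) (hη : IsCutoff η) (hφ : Integrable φ)
    (hφ_nonneg : 0 ≤ φ) {M b : ℝ} (hM : ∀ y, jetNorm η y ≤ M) (hb : 0 < b) :
    ∫ z : ℂ, 2 * jetNorm χ z.re *
        (jetNorm η z.im * ((∫ s, φ s) + b * greenPotential b φ z.im)) ≤
      2 * (∫ x, jetNorm χ x) * (((∫ y, jetNorm η y) + 2 * M) * ∫ s, φ s) := by
  rw [integral_re_mul_im (fun x ↦ 2 * jetNorm χ x)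
    (fun y ↦ jetNorm η y * ((∫ s, φ s) + b * greenPotential b φ y)), integral_const_mul]
  have : 0 ≤ ∫ x, jetNorm χ x := integral_nonneg fun x ↦ jetNorm_nonneg χ x
  gcongr
  exact integral_jetNorm_mul_le hη.contDiff hη.hasCompactSupport hφ hφ_nonneg hM hb

end TestFunction

section Slices

theorem continuous_integral_horizontal {Φ : ℂ → ℝ} (hΦ : Continuous Φ)
    (hΦ_supp : HasCompactSupport Φ) :
    Continuous fun y : ℝ ↦ ∫ x : ℝ, Φ (x + y * Complex.I) := by
  have re_compact : IsCompact (Complex.re '' tsupport Φ) :=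
    hΦ_supp.isCompact.image Complex.continuous_re
  have restrict (y : ℝ) : ∫ x in Complex.re '' tsupport Φ, Φ (x + y * Complex.I) =
      ∫ x : ℝ, Φ (x + y * Complex.I) :=
    setIntegral_eq_integral_of_forall_compl_eq_zero fun x hx ↦
      image_eq_zero_of_notMem_tsupport fun h ↦ hx ⟨_, h, by simp⟩
  simp only [← restrict]
  exact continuous_parametric_integral_of_continuous
    (f := fun (y x : ℝ) ↦ Φ (x + y * Complex.I)) (by fun_prop) re_compact

theorem hasCompactSupport_integral_horizontal {Φ : ℂ → ℝ} (hΦ : HasCompactSupport Φ) :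
    HasCompactSupport fun y : ℝ ↦ ∫ x : ℝ, Φ (x + y * Complex.I) := by
  refine .intro (hΦ.isCompact.image Complex.continuous_im) fun y hy ↦ ?_
  have slice_eq_zero (x : ℝ) : Φ (x + y * Complex.I) = 0 :=
    image_eq_zero_of_notMem_tsupport fun h ↦ hy ⟨_, h, by simp⟩
  simp only [slice_eq_zero, integral_zero]

theorem le_of_forall_integral_mul_le {X : Type*} [TopologicalSpace X] [MeasurableSpace X]
    [OpensMeasurableSpace X] {μ : Measure X} [IsFiniteMeasureOnCompacts μ] [μ.IsOpenPosMeasure]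
    {m : X → ℝ} {c : ℝ} (hm : Continuous m) (hm_supp : HasCompactSupport m) (hc : 0 ≤ c)
    (h : ∀ φ : X → ℝ, Continuous φ → HasCompactSupport φ → 0 ≤ φ →
      ∫ y, m y * φ y ∂μ ≤ c * ∫ y, φ y ∂μ) (y : X) : m y ≤ c := by
  let φ : X → ℝ := fun y ↦ max (m y - c) 0
  have hφ : Continuous φ := by fun_prop
  have hφ_supp : HasCompactSupport φ := hm_supp.mono fun y hy hmy ↦ hy (by simp [φ, hmy, hc])
  have hφ_sq (y : X) : φ y ^ 2 = m y * φ y - c * φ y := by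
    rcases le_total (m y - c) 0 with hle | hle
    · simp [φ, max_eq_right hle]
    · simp only [φ, max_eq_left hle]
      ring
  have sq_supp : HasCompactSupport fun y ↦ φ y ^ 2 :=
    hφ_supp.comp_left (g := (· ^ 2)) (zero_pow two_ne_zero)
  have sq_le : ∫ y, φ y ^ 2 ∂μ ≤ 0 := by
    simp only [hφ_sq]
    rw [integral_sub, integral_const_mul, sub_nonpos]
    · exact h φ hφ hφ_supp fun y ↦ le_max_right _ _
    all_goals exact Continuous.integrable_of_hasCompactSupport (by fun_prop) hφ_supp.mul_left
  by_contra! hy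
  refine sq_le.not_gt (Continuous.integral_pos_of_hasCompactSupport_nonneg_nonzero (x := y)
    (by fun_prop) sq_supp (fun y ↦ sq_nonneg (φ y)) ?_)
  simp [φ, max_eq_left_of_lt (sub_pos.2 hy), (sub_pos.2 hy).ne']

end Slices

section SliceBound

variable {U : Set ℂ} {w : ℂ → ℝ} {B : ℝ}

theorem Subharmonic.integral_mul_le_of_abs_laplacian_add_le {F Ψ G : ℂ → ℝ}
    (hw : Subharmonic U w) (hU : IsOpen U) (hB : 0 ≤ B) (hwB : ∀ z ∈ U, |w z| ≤ B)
    (hF : IsCutoff F) (hFU : tsupport F ⊆ U) (hΨ : Continuous Ψ)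
    (hΨ_supp : HasCompactSupport Ψ) (hΨU : tsupport Ψ ⊆ U) (hG : Integrable G)
    (hFΨ : ∀ z, |Δ F z + Ψ z| ≤ G z) :
    ∫ z, w z * Ψ z ≤ B * ∫ z, G z := by
  have integrable_mul {f : ℂ → ℝ} (hf : Continuous f) (hf_supp : HasCompactSupport f)
      (hfU : tsupport f ⊆ U) : Integrable fun z ↦ w z * f z :=
    ((hw.1.mul hf.continuousOn).continuous_of_tsupport_subset hU
      (tsupport_mul_subset_right.trans hfU)).integrable_of_hasCompactSupport hf_supp.mul_left
  have hΔU := (tsupport_laplacian_subset F).trans hFU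
  have hwΔ := integrable_mul (continuous_laplacian hF.contDiff)
    (hF.hasCompactSupport.of_isClosed_subset (isClosed_tsupport _) (tsupport_laplacian_subset F))
    hΔU
  have hwΨ := integrable_mul hΨ hΨ_supp hΨU
  have pointwise (z : ℂ) : w z * Δ F z + w z * Ψ z ≤ B * G z := by
    by_cases hz : z ∈ U
    · calc w z * Δ F z + w z * Ψ z = w z * (Δ F z + Ψ z) := by ring
        _ ≤ |w z| * |Δ F z + Ψ z| := (le_abs_self _).trans_eq (abs_mul _ _)
        _ ≤ B * G z := mul_le_mul (hwB z hz) (hFΨ z) (abs_nonneg _) hB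
    · rw [image_eq_zero_of_notMem_tsupport (mt (hΔU ·) hz),
        image_eq_zero_of_notMem_tsupport (mt (hΨU ·) hz), mul_zero, add_zero]
      exact mul_nonneg hB ((abs_nonneg _).trans (hFΨ z))
  calc ∫ z, w z * Ψ z ≤ (∫ z, w z * Δ F z) + ∫ z, w z * Ψ z :=
        le_add_of_nonneg_left
          (hw.integral_mul_laplacian_nonneg hU hF.contDiff hF.hasCompactSupport hF.nonneg hFU)
    _ = ∫ z, (w z * Δ F z + w z * Ψ z) := (integral_add hwΔ hwΨ).symm
    _ ≤ ∫ z, B * G z := integral_mono (hwΔ.add hwΨ) (hG.const_mul B) pointwise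
    _ = B * ∫ z, G z := integral_const_mul B _

variable {χ η φ : ℝ → ℝ} {a M : ℝ}

theorem Subharmonic.integral_mul_cos_mul_le (hw : Subharmonic U w) (hU : IsOpen U) (hB : 0 ≤ B)
    (hwB : ∀ z ∈ U, |w z| ≤ B) (hχ : IsCutoff χ) (hη : IsCutoff η)
    (hχηU : tsupport χ ×ℂ tsupport η ⊆ U) (hM : ∀ y, jetNorm η y ≤ M) (ha : a ≠ 0) (θ : ℝ)
    (hφ : Continuous φ) (hφ_supp : HasCompactSupport φ) (hφ_nonneg : 0 ≤ φ) :
    ∫ z : ℂ, w z * (χ z.re * η z.im * (cos (a * z.re + θ) * φ z.im)) ≤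
      B * ((∫ x, jetNorm χ x) * ((∫ y, jetNorm η y) + 2 * M)) / |a| * ∫ y, φ y := by
  have cont_χ := hχ.contDiff.continuous
  have cont_η := hη.contDiff.continuous
  have hχη_supp : HasCompactSupport fun z : ℂ ↦ χ z.re * η z.im :=
    hasCompactSupport_re_mul_im hχ.hasCompactSupport hη.hasCompactSupport
  have hχη_tsupp : tsupport (fun z : ℂ ↦ χ z.re * η z.im) ⊆ U :=
    (tsupport_re_mul_im_subset χ η).trans hχηU
  have tested : ∫ z : ℂ, w z * (2 * |a| * (χ z.re * η z.im * (cos (a * z.re + θ) * φ z.im))) ≤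
      B * ∫ z : ℂ, 2 * jetNorm χ z.re *
        (jetNorm η z.im * ((∫ s, φ s) + |a| * greenPotential |a| φ z.im)) :=
    hw.integral_mul_le_of_abs_laplacian_add_le hU hB hwB
      (isCutoff_testFunction hχ hη hφ hφ_supp hφ_nonneg a θ)
      ((tsupport_testFunction_subset χ η φ a θ).trans hχηU) (by fun_prop)
      hχη_supp.mul_right.mul_left
      (tsupport_mul_subset_right.trans (tsupport_mul_subset_left.trans hχη_tsupp))
      (integrable_jetNorm_re_mul_jetNorm_im hχ hη hφ hφ_supp |a|)
      (abs_laplacian_testFunction_add_le hχ.contDiff hη.contDiff hφ hφ_supp hφ_nonneg a θ)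
  have error_le := integral_jetNorm_re_mul_jetNorm_im_le χ hη
    (hφ.integrable_of_hasCompactSupport hφ_supp) hφ_nonneg hM (abs_pos.2 ha)
  simp only [fun z ↦ mul_left_comm (w z) (2 * |a|), integral_const_mul] at tested
  rw [div_mul_eq_mul_div, le_div_iff₀ (abs_pos.2 ha)]
  linarith [mul_le_mul_of_nonneg_left error_le hB]

theorem Subharmonic.mul_integral_mul_cos_le (hw : Subharmonic U w) (hU : IsOpen U) (hB : 0 ≤ B)
    (hwB : ∀ z ∈ U, |w z| ≤ B) (hχ : IsCutoff χ) (hη : IsCutoff η)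
    (hχηU : tsupport χ ×ℂ tsupport η ⊆ U) (hM : ∀ y, jetNorm η y ≤ M) (ha : a ≠ 0) (θ y : ℝ) :
    η y * ∫ x : ℝ, w (x + y * Complex.I) * (χ x * cos (a * x + θ)) ≤
      B * ((∫ x, jetNorm χ x) * ((∫ y, jetNorm η y) + 2 * M)) / |a| := by
  let Φ : ℂ → ℝ := fun z ↦ w z * (χ z.re * η z.im * cos (a * z.re + θ))
  have weight_cont : Continuous fun z : ℂ ↦ χ z.re * η z.im * cos (a * z.re + θ) := by
    have := hχ.contDiff.continuous
    have := hη.contDiff.continuous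
    fun_prop
  have Φ_cont : Continuous Φ :=
    (hw.1.mul weight_cont.continuousOn).continuous_of_tsupport_subset hU
      (tsupport_mul_subset_right.trans (tsupport_mul_subset_left.trans
        ((tsupport_re_mul_im_subset χ η).trans hχηU)))
  have Φ_supp : HasCompactSupport Φ :=
    (hasCompactSupport_re_mul_im hχ.hasCompactSupport hη.hasCompactSupport).mul_right.mul_left
  have slice_eq (y : ℝ) : ∫ x : ℝ, Φ (x + y * Complex.I) =
      η y * ∫ x : ℝ, w (x + y * Complex.I) * (χ x * cos (a * x + θ)) := by
    rw [← integral_const_mul]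
    congr with x
    simp only [Φ, Complex.add_re, Complex.add_im, Complex.mul_re, Complex.mul_im, Complex.ofReal_re,
      Complex.ofReal_im, Complex.I_re, Complex.I_im, mul_zero, mul_one, sub_zero, zero_add,
      add_zero]
    ring
  rw [← slice_eq]
  refine le_of_forall_integral_mul_le (μ := volume) (continuous_integral_horizontal Φ_cont Φ_supp)
    (hasCompactSupport_integral_horizontal Φ_supp) ?_ (fun φ hφ hφ_supp hφ_nonneg ↦ ?_) y
  · have := (jetNorm_nonneg η 0).trans (hM 0)
    have : 0 ≤ ∫ x, jetNorm χ x := integral_nonneg fun x ↦ jetNorm_nonneg χ x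
    have : 0 ≤ ∫ y, jetNorm η y := integral_nonneg fun y ↦ jetNorm_nonneg η y
    positivity
  calc ∫ y : ℝ, (∫ x : ℝ, Φ (x + y * Complex.I)) * φ y = ∫ z, Φ z * φ z.im := by
        rw [integral_complex_eq_iterated]
        · simp [integral_mul_const]
        · exact Continuous.integrable_of_hasCompactSupport (by fun_prop) Φ_supp.mul_right
    _ = ∫ z, w z * (χ z.re * η z.im * (cos (a * z.re + θ) * φ z.im)) := by
        simp only [Φ, mul_assoc]
    _ ≤ _ := hw.integral_mul_cos_mul_le hU hB hwB hχ hη hχηU hM ha θ hφ hφ_supp hφ_nonneg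

end SliceBound

section UnitCutoff

/-- A smooth cutoff on `[-1, 1]` whose integer translates sum to `1`, so that integrating a
1-periodic function against it gives the integral over a period. -/
noncomputable def unitCutoff (x : ℝ) : ℝ :=
  smoothTransition (x + 1) - smoothTransition x

theorem support_unitCutoff_subset : Function.support unitCutoff ⊆ Ioc (-1) 1 := by
  intro x hx
  by_contra! hx'
  refine hx ?_
  rw [mem_Ioc, not_and_or, not_lt, not_le] at hx'
  rcases hx' with h | h
  · rw [unitCutoff, smoothTransition.zero_of_nonpos (by linarith),
      smoothTransition.zero_of_nonpos (by linarith), sub_zero]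
  · rw [unitCutoff, smoothTransition.one_of_one_le (by linarith),
      smoothTransition.one_of_one_le h.le, sub_self]

theorem isCutoff_unitCutoff : IsCutoff unitCutoff where
  contDiff := (smoothTransition.contDiff.comp (contDiff_id.add contDiff_const)).sub
    smoothTransition.contDiff
  hasCompactSupport := .of_support_subset_isCompact isCompact_Icc
    (support_unitCutoff_subset.trans Ioc_subset_Icc_self)
  nonneg _ := sub_nonneg.2 (smoothTransition.monotone (le_add_of_nonneg_right zero_le_one))

theorem integral_mul_unitCutoff {f : ℝ → ℝ} (hf : Continuous f) (hf_per : Function.Periodic f 1) :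
    ∫ x, f x * unitCutoff x = ∫ x in (0 : ℝ)..1, f x := by
  have := smoothTransition.continuous
  have hfs : Continuous fun x ↦ f x * smoothTransition x := by fun_prop
  calc ∫ x, f x * unitCutoff x = ∫ x in (-1 : ℝ)..1, f x * unitCutoff x :=
        (intervalIntegral.integral_eq_integral_of_support_subset
          ((Function.support_mul_subset_right _ _).trans support_unitCutoff_subset)).symm
    _ = (∫ x in (-1 : ℝ)..1, f (x + 1) * smoothTransition (x + 1)) -
          ∫ x in (-1 : ℝ)..1, f x * smoothTransition x := by
        rw [← intervalIntegral.integral_sub]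
        · simp only [unitCutoff, mul_sub, hf_per _]
        all_goals exact Continuous.intervalIntegrable (by fun_prop) _ _
    _ = (∫ x in (1 : ℝ)..2, f x * smoothTransition x) -
          ∫ x in (-1 : ℝ)..0, f x * smoothTransition x := by
        rw [intervalIntegral.integral_comp_add_right (fun x ↦ f x * smoothTransition x),
          intervalIntegral.integral_interval_sub_interval_comm' (hfs.intervalIntegrable _ _)
            (hfs.intervalIntegrable _ _) (hfs.intervalIntegrable _ _)]
        norm_num
    _ = (∫ x in (1 : ℝ)..2, f x) - ∫ _ in (-1 : ℝ)..0, (0 : ℝ) := by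
        congr 1 <;> refine intervalIntegral.integral_congr fun _ hx ↦ ?_
        · rw [uIcc_of_le one_le_two] at hx
          simp only [smoothTransition.one_of_one_le hx.1, mul_one]
        · rw [uIcc_of_le (by norm_num)] at hx
          simp only [smoothTransition.zero_of_nonpos hx.2, mul_zero]
    _ = ∫ x in (0 : ℝ)..1, f x := by
        have := hf_per.intervalIntegral_add_eq 1 0
        norm_num at this ⊢
        exact this

end UnitCutoff

section FourierCoefficient

theorem exists_norm_integral_mul_exp_eq {f : ℝ → ℝ} (hf : Continuous f) (k : ℤ) : ∃ θ : ℝ,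
    ‖∫ x in (0 : ℝ)..1, (f x : ℂ) *
        Complex.exp (-2 * π * Complex.I * (k : ℂ) * (x : ℂ))‖ =
      ∫ x in (0 : ℝ)..1, f x * cos (2 * π * k * x + θ) := by
  set v := ∫ x in (0 : ℝ)..1, (f x : ℂ) *
    Complex.exp (-2 * π * Complex.I * (k : ℂ) * (x : ℂ))
  refine ⟨v.arg, ?_⟩
  have rotate : Complex.exp (-(v.arg * Complex.I)) * v = (‖v‖ : ℂ) := by
    nth_rewrite 2 [← Complex.norm_mul_exp_arg_mul_I v]
    rw [mul_left_comm, ← Complex.exp_add, neg_add_cancel, Complex.exp_zero, mul_one]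
  calc ‖v‖ = Complex.reCLM (Complex.exp (-(v.arg * Complex.I)) * v) := by
        rw [rotate, Complex.reCLM_apply, Complex.ofReal_re]
    _ = ∫ x in (0 : ℝ)..1, Complex.reCLM (Complex.exp (-(v.arg * Complex.I)) * ((f x : ℂ) *
          Complex.exp (-2 * π * Complex.I * (k : ℂ) * (x : ℂ)))) := by
        rw [ContinuousLinearMap.intervalIntegral_comp_comm, intervalIntegral.integral_const_mul]
        exact Continuous.intervalIntegrable (by fun_prop) _ _
    _ = ∫ x in (0 : ℝ)..1, f x * cos (2 * π * k * x + v.arg) := by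
        congr with x
        have phase : -(v.arg * Complex.I) + -2 * π * Complex.I * k * x =
            ((-(2 * π * k * x + v.arg) : ℝ) : ℂ) * Complex.I := by
          push_cast
          ring
        rw [Complex.reCLM_apply, mul_left_comm, ← Complex.exp_add, Complex.re_ofReal_mul, phase,
          Complex.exp_ofReal_mul_I_re, cos_neg]

theorem periodic_mul_cos_two_pi_int_mul {f : ℝ → ℝ} (hf : Function.Periodic f 1) (k : ℤ) (θ : ℝ) :
    Function.Periodic (fun x ↦ f x * cos (2 * π * k * x + θ)) 1 := by
  intro x
  have shift : 2 * π * k * (x + 1) + θ = 2 * π * k * x + θ + k * (2 * π) := by ring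
  simp only [hf x, shift, cos_add_int_mul_two_pi]

theorem continuous_ofReal_of_continuousOn_strip {δ : ℝ} (hδ : 0 < δ) {w : ℂ → ℝ}
    (hw : ContinuousOn w {z | |z.im| < δ}) : Continuous fun x : ℝ ↦ w x :=
  hw.comp_continuous Complex.continuous_ofReal fun x ↦ by simpa using hδ

theorem exists_integral_mul_cutoff_mul_cos_le {δ : ℝ} (hδ : 0 < δ) {χ : ℝ → ℝ}
    (hχ : IsCutoff χ) :
    ∃ C : ℝ, 0 < C ∧ ∀ (B : ℝ) (w : ℂ → ℝ), Subharmonic {z | |z.im| < δ} w →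
      (∀ z : ℂ, |z.im| < δ → |w z| ≤ B) → ∀ a : ℝ, a ≠ 0 → ∀ θ : ℝ,
        ∫ x : ℝ, w x * (χ x * cos (a * x + θ)) ≤ C * B / |a| := by
  obtain ⟨η, hη_tsupp, hη_supp, hη_smooth, hη_range, hη_zero⟩ :=
    exists_contDiff_tsupport_subset (n := 2) (Ioo_mem_nhds (neg_lt_zero.2 hδ) hδ)
  have hη : IsCutoff η := ⟨hη_smooth, hη_supp, fun y ↦ (hη_range ⟨y, rfl⟩).1⟩
  obtain ⟨M, hM⟩ := (hasCompactSupport_jetNorm hη_supp).exists_bound_of_continuous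
    (continuous_jetNorm hη_smooth)
  replace hM (y : ℝ) : jetNorm η y ≤ M := (le_abs_self _).trans (hM y)
  set A := (∫ x, jetNorm χ x) * ((∫ y, jetNorm η y) + 2 * M)
  have hA : 0 ≤ A := by
    have := (jetNorm_nonneg η 0).trans (hM 0)
    have : 0 ≤ ∫ x, jetNorm χ x := integral_nonneg fun x ↦ jetNorm_nonneg χ x
    have : 0 ≤ ∫ y, jetNorm η y := integral_nonneg fun y ↦ jetNorm_nonneg η y
    positivity
  refine ⟨A + 1, by positivity, fun B w hw hwB a ha θ ↦ ?_⟩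
  have hB : 0 ≤ B := (abs_nonneg _).trans (hwB 0 (by simpa using hδ))
  have slice := hw.mul_integral_mul_cos_le (isOpen_lt (by fun_prop) continuous_const) hB hwB
    hχ hη (fun z hz ↦ abs_lt.2 (hη_tsupp hz.2)) hM ha θ 0
  calc ∫ x : ℝ, w x * (χ x * cos (a * x + θ)) ≤ B * A / |a| := by simpa [hη_zero] using slice
    _ ≤ (A + 1) * B / |a| := by
      rw [mul_comm B]
      gcongr
      exact le_add_of_nonneg_right zero_le_one

theorem exists_integral_mul_cos_le {δ : ℝ} (hδ : 0 < δ) :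
    ∃ C : ℝ, 0 < C ∧ ∀ (B : ℝ) (w : ℂ → ℝ), Subharmonic {z | |z.im| < δ} w →
      (∀ z : ℂ, |z.im| < δ → |w z| ≤ B) → Function.Periodic (fun x : ℝ ↦ w x) 1 →
      ∀ k : ℤ, k ≠ 0 → ∀ θ : ℝ,
        ∫ x in (0 : ℝ)..1, w x * cos (2 * π * k * x + θ) ≤ C * B / |(k : ℝ)| := by
  obtain ⟨C, hC, hbound⟩ := exists_integral_mul_cutoff_mul_cos_le hδ isCutoff_unitCutoff
  refine ⟨C / (2 * π), by positivity, fun B w hw hwB hw_per k hk θ ↦ ?_⟩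
  have hcos_cont : Continuous fun x : ℝ ↦ w x * cos (2 * π * k * x + θ) :=
    (continuous_ofReal_of_continuousOn_strip hδ hw.1).mul (by fun_prop)
  calc ∫ x in (0 : ℝ)..1, w x * cos (2 * π * k * x + θ)
    _ = ∫ x : ℝ, w x * cos (2 * π * k * x + θ) * unitCutoff x :=
      (integral_mul_unitCutoff hcos_cont (periodic_mul_cos_two_pi_int_mul hw_per k θ)).symm
    _ = ∫ x : ℝ, w x * (unitCutoff x * cos (2 * π * k * x + θ)) := by
      simp only [mul_assoc, mul_comm (unitCutoff _)]
    _ ≤ C * B / |2 * π * k| :=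
      hbound B w hw hwB _ (mul_ne_zero two_pi_pos.ne' (Int.cast_ne_zero.2 hk)) θ
    _ = C / (2 * π) * B / |(k : ℝ)| := by
      rw [abs_mul, abs_of_pos two_pi_pos]
      ring

theorem fourier_coeff_bound_of_subharmonic_extension_general {δ : ℝ} (hδ : 0 < δ) :
    ∃ C : ℝ, 0 < C ∧
      ∀ (B : ℝ) (w : ℂ → ℝ), Subharmonic {z : ℂ | |z.im| < δ} w →
        (∀ z : ℂ, |z.im| < δ → |w z| ≤ B) → Function.Periodic (fun x : ℝ ↦ w x) 1 →
        ∀ k : ℤ, k ≠ 0 →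
          ‖∫ x in (0 : ℝ)..1, (w x : ℂ) *
              Complex.exp (-2 * π * Complex.I * (k : ℂ) * (x : ℂ))‖
            ≤ C * B / (|k| : ℝ) := by
  obtain ⟨C, hC, hbound⟩ := exists_integral_mul_cos_le hδ
  refine ⟨C, hC, fun B w hw hwB hw_per k hk ↦ ?_⟩
  obtain ⟨θ, hθ⟩ := exists_norm_integral_mul_exp_eq
    (continuous_ofReal_of_continuousOn_strip hδ hw.1) k
  exact hθ.trans_le (hbound B w hw hwB hw_per k hk θ)

end FourierCoefficient

end

/-- Fourier coefficients of a bounded 1-periodic function with a bounded subharmonic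
extension to the strip `|Im z| < 1` decay like `B/|k|`. -/
theorem fourier_coeff_bound_of_subharmonic_extension :
    ∃ C : ℝ, 0 < C ∧
      ∀ B : ℝ, 1 ≤ B →
      ∀ u : ℝ → ℝ, Function.Periodic u 1 → (∀ x : ℝ, |u x| ≤ 1) →
      ∀ utilde : ℂ → ℝ,
        (∀ x : ℝ, utilde (x : ℂ) = u x) →
        Subharmonic {z : ℂ | |z.im| < 1} utilde →
        (∀ z : ℂ, |z.im| < 1 → |utilde z| ≤ B) →
        ∀ k : ℤ, k ≠ 0 →
          ‖∫ x in (0:ℝ)..1, (u x : ℂ) *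
              Complex.exp (-2 * Real.pi * Complex.I * (k : ℂ) * (x : ℂ))‖
            ≤ C * B / (|k| : ℝ) := by
  obtain ⟨C, hC, hbound⟩ := fourier_coeff_bound_of_subharmonic_extension_general one_pos
  refine ⟨C, hC, fun B _ u hu _ w hwu hw hwB k hk ↦ ?_⟩
  simpa only [hwu] using hbound B w hw hwB (by simpa only [hwu] using hu) k hk
end

section
/- Let c > 0, A ≥ 1, B ≥ 1 and let ω ∈ ℝ satisfy DC(c,A). Let u : ℝ → ℝ be 1-periodic with |u(x)| ≤ 1 for all x, admitting a subharmonic extension ũ to the strip {z ∈ ℂ : |Im z| < 1} with |ũ(z)| ≤ B. Then there exist σ = σ(A) > 0 (one may take σ = 1/(50A)), c̃ > 0, and M₀ (depending on c, A, B) such that for every integer M ≥ M₀, the Lebesgue measure of the set {x ∈ [0,1] : |∑_{0 ≤ |m| < M} ((M−|m|)/M²)·u(x+mω) − û(0)| > M^{−σ}} is less than e^{−c̃·M^σ}, where û(0) = ∫₀¹ u. -/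
open MeasureTheory

/-- Distance from a real number to the nearest integer. -/
noncomputable def distToInt (θ : ℝ) : ℝ := |θ - round θ|

/-- The Diophantine condition `‖kω‖ > c·|k|^{-A}` for all nonzero integers `k`. -/
def IsDC (c A ω : ℝ) : Prop :=
  ∀ k : ℤ, k ≠ 0 → c * (|k| : ℝ) ^ (-A) < distToInt (k * ω)

/-!
At height `ρ` above the real line, the subharmonic function is majorized up to `O(ρ)` by the Poisson
extension of its boundary values, which is Lipschitz there with constant `O(1 / ρ)`. Fejér averages
of periodic Lipschitz functions along a Diophantine rotation converge uniformly to the mean at a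
power rate, so by the maximum principle the Fejér average minus its mean, `v`, is `O(ρ)` on
`|im z| ≤ ρ`, and `O(ρ²)` on the real line.

Let `E` be the part of `v ≤ -λ` inside a real interval of length comparable to `ρ`. Comparing `v`
with the logarithmic potential of `E` shows that if `|E|` were larger than `ρ exp (-κ λ / ρ)`, for a
suitable constant `κ`, then `v` would be at most a negative multiple of `ρ` on a real interval of
length comparable to `ρ`. Since `v` is `O(ρ²)` elsewhere on the real line, this contradicts its mean
being zero.
-/

open Set Metric Filter Topology Real ProbabilityTheory

/-! ### Subharmonic functions and the maximum principle -/

/-- Continuous functions whose value at the centre of every closed disk in `U` equals their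
average over the boundary circle. These are the harmonic functions, and the functions that may be
subtracted from a subharmonic one. -/
def HasMeanValueProperty (U : Set ℂ) (h : ℂ → ℝ) : Prop :=
  ContinuousOn h U ∧ ∀ z r, 0 < r → closedBall z r ⊆ U → circleAverage h z r = h z

lemma circleIntegrable_of_continuousOn_of_closedBall_subset {U : Set ℂ} {w : ℂ → ℝ}
    (hw : ContinuousOn w U) {z : ℂ} {r : ℝ} (hr : 0 < r) (h : closedBall z r ⊆ U) :
    CircleIntegrable w z r :=
  (hw.mono (sphere_subset_closedBall.trans h)).circleIntegrable hr.le

namespace HasMeanValueProperty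

variable {U : Set ℂ} {h : ℂ → ℝ}

lemma of_harmonicOnNhd (hh : InnerProductSpace.HarmonicOnNhd h U) : HasMeanValueProperty U h :=
  ⟨fun z hz ↦ (hh z hz).1.continuousAt.continuousWithinAt, fun _ r hr hball ↦
    (hh.mono (by rwa [abs_of_pos hr])).circleAverage_eq⟩

lemma const_mul (hh : HasMeanValueProperty U h) (a : ℝ) :
    HasMeanValueProperty U (fun z ↦ a * h z) :=
  ⟨continuousOn_const.mul hh.1, fun z r hr hball ↦
    (circleAverage_fun_smul (a := a) (f := h)).trans (congrArg (a * ·) (hh.2 z r hr hball))⟩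

lemma mono {V : Set ℂ} (hh : HasMeanValueProperty U h) (hVU : V ⊆ U) :
    HasMeanValueProperty V h :=
  ⟨hh.1.mono hVU, fun z r hr hball ↦ hh.2 z r hr (hball.trans hVU)⟩

end HasMeanValueProperty

namespace Subharmonic

variable {U V : Set ℂ} {w h : ℂ → ℝ}

lemma le_circleAverage (hw : Subharmonic U w) {z : ℂ} {r : ℝ} (hr : 0 < r)
    (hball : closedBall z r ⊆ U) : w z ≤ circleAverage w z r :=
  hw.2 z r hr hball

lemma mono (hw : Subharmonic U w) (hVU : V ⊆ U) : Subharmonic V w :=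
  ⟨hw.1.mono hVU, fun z r hr hball ↦ hw.2 z r hr (hball.trans hVU)⟩

lemma const_mul (hw : Subharmonic U w) {a : ℝ} (ha : 0 ≤ a) :
    Subharmonic U (fun z ↦ a * w z) :=
  ⟨continuousOn_const.mul hw.1, fun _ _ hr hball ↦
    (mul_le_mul_of_nonneg_left (hw.le_circleAverage hr hball) ha).trans_eq
      (circleAverage_fun_smul (a := a) (f := w)).symm⟩

lemma sum {ι : Type*} {s : Finset ι} {f : ι → ℂ → ℝ} (hf : ∀ i ∈ s, Subharmonic U (f i)) :
    Subharmonic U (fun z ↦ ∑ i ∈ s, f i z) :=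
  ⟨continuousOn_finsetSum s fun i hi ↦ (hf i hi).1, fun _ _ hr hball ↦
    (Finset.sum_le_sum fun i hi ↦ (hf i hi).le_circleAverage hr hball).trans_eq
      (circleAverage_fun_sum fun i hi ↦
        circleIntegrable_of_continuousOn_of_closedBall_subset (hf i hi).1 hr hball).symm⟩

lemma sub (hw : Subharmonic U w) (hh : HasMeanValueProperty U h) :
    Subharmonic U (fun z ↦ w z - h z) := by
  refine ⟨hw.1.sub hh.1, fun z r hr hball ↦ ?_⟩
  have hsub := circleAverage_fun_sub
    (circleIntegrable_of_continuousOn_of_closedBall_subset hw.1 hr hball)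
    (circleIntegrable_of_continuousOn_of_closedBall_subset hh.1 hr hball)
  rw [hh.2 z r hr hball] at hsub
  exact (sub_le_sub_right (hw.le_circleAverage hr hball) _).trans_eq hsub.symm

lemma comp_add_const (hw : Subharmonic U w) (a : ℂ) :
    Subharmonic ((· + a) ⁻¹' U) (fun z ↦ w (z + a)) := by
  refine ⟨hw.1.comp (by fun_prop) (mapsTo_preimage _ _), fun z r hr hball ↦ ?_⟩
  have hball' : closedBall (z + a) r ⊆ U := by
    intro y hy
    simpa using hball (show y - a ∈ closedBall z r by
      simpa [dist_eq_norm, sub_sub, add_comm] using hy)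
  have hshift : circleAverage (fun y ↦ w (y + a)) z r = circleAverage w (z + a) r := by
    simp only [circleAverage, circleMap, add_right_comm]
  exact (hw.le_circleAverage hr hball').trans_eq hshift.symm

end Subharmonic

lemma circleAverage_lt_of_le_of_exists_lt {w : ℂ → ℝ} {z : ℂ} {r m : ℝ} (hr : 0 < r)
    (hw : ContinuousOn w (sphere z r)) (hle : ∀ y ∈ sphere z r, w y ≤ m)
    (hlt : w (z + r) < m) : circleAverage w z r < m := by
  have hmem θ : circleMap z r θ ∈ sphere z r := circleMap_mem_sphere z hr.le θ
  have hint : ∫ θ in (0 : ℝ)..(2 * π), w (circleMap z r θ) < ∫ _ in (0 : ℝ)..(2 * π), m :=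
    intervalIntegral.integral_lt_integral_of_continuousOn_of_le_of_exists_lt two_pi_pos
      (hw.comp (continuous_circleMap z r).continuousOn fun θ _ ↦ hmem θ) continuousOn_const
      (fun θ _ ↦ hle _ (hmem θ)) ⟨0, ⟨le_rfl, two_pi_pos.le⟩, by simpa [circleMap] using hlt⟩
  calc circleAverage w z r
      < (2 * π)⁻¹ • ∫ _ in (0 : ℝ)..(2 * π), m :=
        mul_lt_mul_of_pos_left hint (inv_pos.2 two_pi_pos)
    _ = m := by
        rw [intervalIntegral.integral_const, sub_zero, smul_eq_mul, smul_eq_mul,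
          inv_mul_cancel_left₀ two_pi_pos.ne']

/- Among the points of `K` where `w` is maximal take one with maximal real part: a circle around it
inside `V` would contain a point where `w` is strictly smaller. -/
theorem Subharmonic.le_of_isCompact {K V : Set ℂ} {w : ℂ → ℝ} {m : ℝ} (hK : IsCompact K)
    (hV : IsOpen V) (hVK : V ⊆ K) (hw : ContinuousOn w K) (hsub : Subharmonic V w)
    (hm : ∀ z ∈ K \ V, w z ≤ m) {z : ℂ} (hz : z ∈ K) : w z ≤ m := by
  obtain ⟨p, hpK, hpmax⟩ := hK.exists_isMaxOn ⟨z, hz⟩ hw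
  have hcompact : IsCompact (K ∩ w ⁻¹' {w p}) :=
    hK.of_isClosed_subset (hw.preimage_isClosed_of_isClosed hK.isClosed isClosed_singleton)
      inter_subset_left
  obtain ⟨q, ⟨hqK, hqp : w q = w p⟩, hqmax⟩ :=
    hcompact.exists_isMaxOn ⟨p, hpK, rfl⟩ Complex.continuous_re.continuousOn
  suffices hqV : q ∉ V from (hpmax hz).trans (hqp.ge.trans (hm q ⟨hqK, hqV⟩))
  intro hqV
  obtain ⟨r, hr, hball⟩ := nhds_basis_closedBall.mem_iff.1 (hV.mem_nhds hqV)
  have hsphere : sphere q r ⊆ K := sphere_subset_closedBall.trans (hball.trans hVK)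
  have hright : q + r ∈ K := hsphere (by simp [abs_of_pos hr])
  have hlt : w (q + r) < w q := by
    refine (hqp ▸ hpmax hright : w (q + r) ≤ w q).lt_of_ne fun heq ↦ ?_
    have hre : (q + r).re ≤ q.re := hqmax ⟨hright, heq.trans hqp⟩
    simp only [Complex.add_re, Complex.ofReal_re] at hre
    linarith
  exact (circleAverage_lt_of_le_of_exists_lt hr (hw.mono hsphere)
    (fun y hy ↦ hqp ▸ hpmax (hsphere hy)) hlt).not_ge (hsub.le_circleAverage hr hball)

lemma hasMeanValueProperty_re_sq_sub_im_sq (U : Set ℂ) (x D : ℝ) :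
    HasMeanValueProperty U (fun z ↦ (z.re - x) ^ 2 - z.im ^ 2 + D) := by
  have hre : (fun z : ℂ ↦ (z.re - x) ^ 2 - z.im ^ 2 + D) = fun z ↦ ((z - x) ^ 2 + D : ℂ).re := by
    ext z
    simp [pow_two]
  rw [hre]
  exact .of_harmonicOnNhd fun z _ ↦ AnalyticAt.harmonicAt_re (by fun_prop)

lemma Subharmonic.le_add_of_horizontal_rectangle {T V : Set ℝ} {w : ℂ → ℝ} {m K D R : ℝ}
    (hT : IsCompact T) (hV : IsOpen V) (hVT : V ⊆ T) (hD : ∀ y ∈ T, y ^ 2 ≤ D)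
    (hw : ContinuousOn w (Complex.im ⁻¹' T)) (hsub : Subharmonic (Complex.im ⁻¹' V) w)
    (hK : 0 ≤ K) (hwK : ∀ z : ℂ, z.im ∈ T → w z ≤ m + K)
    (hwm : ∀ z : ℂ, z.im ∈ T \ V → w z ≤ m) (hR : 0 < R) {z : ℂ} (hz : z.im ∈ T) :
    w z ≤ m + K / R ^ 2 * D := by
  let barrier : ℂ → ℝ := fun y ↦ K / R ^ 2 * ((y.re - z.re) ^ 2 - y.im ^ 2 + D)
  have hcompact : IsCompact (Icc (z.re - R) (z.re + R) ×ℂ T) := isCompact_Icc.reProdIm hT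
  have hmax : w z - barrier z ≤ m := by
    refine Subharmonic.le_of_isCompact (w := fun y ↦ w y - barrier y) hcompact
      (isOpen_Ioo.reProdIm hV : IsOpen (Ioo (z.re - R) (z.re + R) ×ℂ V))
      (fun y hy ↦ ⟨Ioo_subset_Icc_self hy.1, hVT hy.2⟩)
      ((hw.mono fun y hy ↦ hy.2).sub (by fun_prop))
      ((hsub.mono fun y hy ↦ hy.2).sub
        ((hasMeanValueProperty_re_sq_sub_im_sq _ _ D).const_mul _)) ?_
      ⟨⟨by linarith, by linarith⟩, hz⟩
    rintro y ⟨⟨⟨hre₁, hre₂⟩, him⟩, hyV⟩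
    have hbarrier : K / R ^ 2 * (y.re - z.re) ^ 2 ≤ barrier y :=
      mul_le_mul_of_nonneg_left (by linarith [hD _ him]) (by positivity)
    by_cases hyim : y.im ∈ V
    · have hside : (y.re - z.re) ^ 2 = R ^ 2 := by
        rcases hre₁.eq_or_lt with h | h
        · rw [← h]; ring
        · rcases hre₂.eq_or_lt with h' | h'
          · rw [h']; ring
          · exact (hyV ⟨⟨h, h'⟩, hyim⟩).elim
      rw [hside, div_mul_cancel₀ _ (by positivity)] at hbarrier
      linarith [hwK y him]
    · have : 0 ≤ K / R ^ 2 * (y.re - z.re) ^ 2 := by positivity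
      linarith [hwm y ⟨him, hyim⟩]
  have : barrier z ≤ K / R ^ 2 * D :=
    mul_le_mul_of_nonneg_left (by nlinarith [sq_nonneg z.im]) (by positivity)
  linarith

theorem Subharmonic.le_of_horizontal_strip {T V : Set ℝ} {w : ℂ → ℝ} {m C : ℝ} (hT : IsCompact T)
    (hV : IsOpen V) (hVT : V ⊆ T) (hw : ContinuousOn w (Complex.im ⁻¹' T))
    (hsub : Subharmonic (Complex.im ⁻¹' V) w) (hC : ∀ z : ℂ, z.im ∈ T → w z ≤ C)
    (hm : ∀ z : ℂ, z.im ∈ T \ V → w z ≤ m) {z : ℂ} (hz : z.im ∈ T) : w z ≤ m := by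
  obtain ⟨D, hD⟩ := (hT.image (continuous_pow 2)).bddAbove
  have hlim : Tendsto (fun R : ℝ ↦ m + max (C - m) 0 / R ^ 2 * D) atTop (𝓝 (m + 0 * D)) :=
    tendsto_const_nhds.add
      ((tendsto_const_nhds.div_atTop (tendsto_pow_atTop two_ne_zero)).mul_const D)
  rw [zero_mul, add_zero] at hlim
  refine ge_of_tendsto hlim ((eventually_gt_atTop 0).mono fun R hR ↦ ?_)
  exact hsub.le_add_of_horizontal_rectangle hT hV hVT (fun y hy ↦ hD (mem_image_of_mem _ hy)) hw
    (le_max_right _ _)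
    (fun z hz ↦ by linarith [hC z hz, le_max_left (C - m) 0]) hm hR hz

/-! ### The Poisson extension of a bounded function -/

lemma HasMeanValueProperty.abs {U : Set ℂ} {h : ℂ → ℝ} (hh : HasMeanValueProperty U h)
    (hne : ∀ z ∈ U, h z ≠ 0) : HasMeanValueProperty U (fun z ↦ |h z|) := by
  refine ⟨hh.1.abs, fun z r hr hball ↦ ?_⟩
  have hconn : IsPreconnected (h '' closedBall z r) :=
    (convex_closedBall z r).isPreconnected.image _ (hh.1.mono hball)
  have hsphere : sphere z |r| ⊆ closedBall z r := by
    simpa [abs_of_pos hr] using sphere_subset_closedBall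
  have hsign : (∀ y ∈ closedBall z r, |h y| = h y) ∨ ∀ y ∈ closedBall z r, |h y| = -h y := by
    by_contra! hcon
    obtain ⟨⟨y, hy, hy_neg⟩, y', hy', hy_pos⟩ := hcon
    obtain ⟨p, hp, hp0⟩ := hconn.Icc_subset (mem_image_of_mem h hy) (mem_image_of_mem h hy')
      ⟨(not_le.1 (mt abs_of_nonneg hy_neg)).le, (not_le.1 (mt abs_of_nonpos hy_pos)).le⟩
    exact hne p (hball hp) hp0
  have hz : z ∈ closedBall z r := mem_closedBall_self hr.le
  rcases hsign with hpos | hneg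
  · rw [circleAverage_congr_sphere fun y hy ↦ hpos y (hsphere hy), hh.2 z r hr hball]
    exact (hpos z hz).symm
  · rw [circleAverage_congr_sphere (f₂ := fun y ↦ -1 * h y) fun y hy ↦ by
      simp [hneg y (hsphere hy)], (hh.const_mul (-1)).2 z r hr hball]
    simp [hneg z hz]

lemma hasMeanValueProperty_abs_im :
    HasMeanValueProperty {z : ℂ | z.im ≠ 0} (fun z ↦ |z.im|) :=
  HasMeanValueProperty.abs
    (.of_harmonicOnNhd fun _ _ ↦ AnalyticAt.harmonicAt_im analyticAt_id) fun _ hz ↦ hz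

lemma hasMeanValueProperty_cauchyPDFReal (t : ℝ) :
    HasMeanValueProperty {z : ℂ | z.im ≠ 0} (fun z ↦ cauchyPDFReal z.re (nnabs z.im) t) := by
  have hne : ∀ z : ℂ, z.im ≠ 0 → z - t ≠ 0 := fun z hz h ↦ hz (by simpa using congrArg Complex.im h)
  have hre (z : ℂ) : (Complex.I / (z - t)).re = z.im / ((t - z.re) ^ 2 + z.im ^ 2) := by
    rw [Complex.div_re, Complex.normSq_apply]
    simp only [Complex.I_re, Complex.I_im, Complex.sub_re, Complex.sub_im, Complex.ofReal_re,
      Complex.ofReal_im]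
    ring_nf
  have hharmonic : HasMeanValueProperty {z : ℂ | z.im ≠ 0} (fun z ↦ (Complex.I / (z - t)).re) :=
    .of_harmonicOnNhd fun z hz ↦ AnalyticAt.harmonicAt_re
      (analyticAt_const.div (by fun_prop) (hne z hz))
  have hkernel (z : ℂ) :
      cauchyPDFReal z.re (nnabs z.im) t = π⁻¹ * |(Complex.I / (z - t)).re| := by
    rw [hre, abs_div, abs_of_nonneg (by positivity : 0 ≤ (t - z.re) ^ 2 + z.im ^ 2),
      cauchyPDFReal_def, coe_nnabs, sq_abs]
    ring
  simp only [hkernel]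
  refine (hharmonic.abs fun z (hz : z.im ≠ 0) ↦ ?_).const_mul _
  rw [hre]
  positivity

/-- The Poisson extension of `u` to the upper half-plane, reflected to the lower one. It is written
as an average of `u` against the Cauchy distribution, so that it makes sense on the real line,
where it equals `u`. -/
noncomputable def poissonExtension (u : ℝ → ℝ) (z : ℂ) : ℝ :=
  ∫ t, u (z.re + |z.im| * t) ∂cauchyMeasure 0 1

section PoissonExtension

variable {u : ℝ → ℝ} {B : ℝ}

lemma poissonExtension_of_im_eq_zero (u : ℝ → ℝ) {z : ℂ} (hz : z.im = 0) :
    poissonExtension u z = u z.re := by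
  simp [poissonExtension, hz]

lemma abs_poissonExtension_le (hB : ∀ x, |u x| ≤ B) (z : ℂ) : |poissonExtension u z| ≤ B := by
  simpa [poissonExtension] using
    norm_integral_le_of_norm_le_const (μ := cauchyMeasure 0 1)
      (f := fun t ↦ u (z.re + |z.im| * t)) (Eventually.of_forall fun _ ↦ hB _)

lemma continuous_poissonExtension (hu : Continuous u) (hB : ∀ x, |u x| ≤ B) :
    Continuous (poissonExtension u) :=
  continuous_of_dominated (bound := fun _ ↦ B)
    (fun _ ↦ (hu.comp (by fun_prop)).aestronglyMeasurable)
    (fun _ ↦ Eventually.of_forall fun _ ↦ hB _) (integrable_const B)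
    (Eventually.of_forall fun _ ↦ hu.comp (by fun_prop))

lemma periodic_poissonExtension_add_ofReal {T : ℝ} (hu : Function.Periodic u T) (z : ℂ) :
    Function.Periodic (fun x : ℝ ↦ poissonExtension u (z + x)) T := fun x ↦ by
  simp only [poissonExtension, Complex.ofReal_add, Complex.add_re, Complex.add_im,
    Complex.ofReal_re, Complex.ofReal_im, add_zero]
  refine integral_congr_ae (Eventually.of_forall fun t ↦ ?_)
  simpa only [add_assoc, add_comm T] using hu (z.re + x + |z.im| * t)

lemma intervalIntegral_poissonExtension_add_ofReal {T : ℝ} (hu : Continuous u)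
    (hB : ∀ x, |u x| ≤ B) (hT : Function.Periodic u T) (z : ℂ) :
    ∫ x in (0 : ℝ)..T, poissonExtension u (z + x) = ∫ x in (0 : ℝ)..T, u x := by
  have hperiod (t : ℝ) : ∫ x in (0 : ℝ)..T, u (z.re + x + |z.im| * t) = ∫ x in (0 : ℝ)..T, u x := by
    have hshift := hT.intervalIntegral_add_eq (z.re + |z.im| * t) 0
    rw [zero_add] at hshift
    simpa [add_right_comm, ← hshift] using
      intervalIntegral.integral_comp_add_left u (z.re + |z.im| * t) (a := 0) (b := T)
  have : IsFiniteMeasure (volume.restrict (uIoc 0 T)) := isFiniteMeasure_restrict_Ioc _ _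
  have hint : Integrable (Function.uncurry fun x t : ℝ ↦ u (z.re + x + |z.im| * t))
      ((volume.restrict (uIoc 0 T)).prod (cauchyMeasure 0 1)) :=
    Integrable.of_bound (hu.comp (by fun_prop)).aestronglyMeasurable B
      (Eventually.of_forall fun _ ↦ hB _)
  simp only [poissonExtension, Complex.add_re, Complex.add_im, Complex.ofReal_re,
    Complex.ofReal_im, add_zero]
  rw [intervalIntegral_integral_swap hint]
  simp [hperiod]

lemma poissonExtension_eq_integral_cauchyPDFReal (u : ℝ → ℝ) {z : ℂ} (hz : z.im ≠ 0) :
    poissonExtension u z = ∫ t, u t * cauchyPDFReal z.re (nnabs z.im) t := by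
  have hz' : 0 < |z.im| := abs_pos.2 hz
  have hpdf (t : ℝ) : cauchyPDFReal 0 1 t
      = |z.im| * cauchyPDFReal z.re (nnabs z.im) (z.re + |z.im| * t) := by
    simp only [cauchyPDFReal_def, coe_nnabs, sub_zero, add_sub_cancel_left, NNReal.coe_one]
    field_simp
  have hdensity : poissonExtension u z
      = ∫ t, cauchyPDFReal 0 1 t * u (z.re + |z.im| * t) := by
    rw [poissonExtension, cauchyMeasure_of_scale_ne_zero 0 one_ne_zero,
      integral_withDensity_eq_integral_toReal_smul (measurable_cauchyPDF 0 1)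
        (Eventually.of_forall fun _ ↦ ENNReal.ofReal_lt_top)]
    simp only [cauchyPDF, ENNReal.toReal_ofReal (cauchyPDF_pos 0 one_ne_zero _).le, smul_eq_mul]
  let g : ℝ → ℝ := fun t ↦ u t * cauchyPDFReal z.re (nnabs z.im) t
  calc poissonExtension u z = |z.im| * ∫ t, g (z.re + |z.im| * t) := by
        rw [hdensity, ← integral_const_mul]
        refine integral_congr_ae (Eventually.of_forall fun t ↦ ?_)
        simp only [hpdf, g]
        ring
    _ = ∫ t, g t := by
        rw [Measure.integral_comp_mul_left (fun t ↦ g (z.re + t)), integral_add_left_eq_self g,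
          abs_of_pos (inv_pos.2 hz'), smul_eq_mul, mul_inv_cancel_left₀ hz'.ne']

lemma integrable_mul_cauchyPDFReal (hu : Continuous u) (hB : ∀ x, |u x| ≤ B) (z : ℂ) :
    Integrable (fun t ↦ u t * cauchyPDFReal z.re (nnabs z.im) t) :=
  (integrable_cauchyPDFReal _).bdd_mul hu.aestronglyMeasurable (Eventually.of_forall hB)

lemma integrable_mul_cauchyPDFReal_prod {α : Type*} [MeasurableSpace α] {μ : Measure α}
    [IsFiniteMeasure μ] {γ : α → ℂ} (hγ : Measurable γ) (hγ0 : ∀ a, (γ a).im ≠ 0)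
    (hu : Continuous u) (hB : ∀ x, |u x| ≤ B) :
    Integrable (Function.uncurry fun a t ↦ u t * cauchyPDFReal (γ a).re (nnabs (γ a).im) t)
      (μ.prod volume) := by
  have hmeas : Measurable
      (fun p : α × ℝ ↦ cauchyPDFReal (γ p.1).re (nnabs (γ p.1).im) p.2) := by
    simp only [cauchyPDFReal_def, coe_nnabs]
    fun_prop
  have hnorm (a : α) : ∫ t, ‖cauchyPDFReal (γ a).re (nnabs (γ a).im) t‖ = 1 := by
    have hscale : nnabs (γ a).im ≠ 0 := by simpa using hγ0 a
    simp only [norm_of_nonneg (cauchyPDF_pos _ hscale _).le]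
    exact integral_cauchyPDFReal_eq_one _ hscale
  have hkernel := (integrable_prod_iff (μ := μ) (ν := volume) hmeas.aestronglyMeasurable).2
    ⟨Eventually.of_forall fun a ↦ by simpa using integrable_cauchyPDFReal (γ a).re, by
      simpa only [hnorm] using integrable_const (μ := μ) (1 : ℝ)⟩
  exact hkernel.bdd_mul (hu.measurable.comp measurable_snd).aestronglyMeasurable
    (Eventually.of_forall fun p ↦ hB p.2)

lemma hasMeanValueProperty_poissonExtension (hu : Continuous u) (hB : ∀ x, |u x| ≤ B) :
    HasMeanValueProperty {z : ℂ | z.im ≠ 0} (poissonExtension u) := by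
  refine ⟨(continuous_poissonExtension hu hB).continuousOn, fun z r hr hball ↦ ?_⟩
  have hcircle (θ : ℝ) : (circleMap z r θ).im ≠ 0 := hball (circleMap_mem_closedBall z hr.le θ)
  have hmean (t : ℝ) : (2 * π)⁻¹ * ∫ θ in (0 : ℝ)..(2 * π),
      u t * cauchyPDFReal (circleMap z r θ).re (nnabs (circleMap z r θ).im) t
        = u t * cauchyPDFReal z.re (nnabs z.im) t := by
    rw [intervalIntegral.integral_const_mul, mul_left_comm]
    exact congrArg _ ((hasMeanValueProperty_cauchyPDFReal t).2 z r hr hball)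
  have : IsFiniteMeasure (volume.restrict (uIoc 0 (2 * π))) := isFiniteMeasure_restrict_Ioc _ _
  rw [circleAverage_def, poissonExtension_eq_integral_cauchyPDFReal u
    (hball (mem_closedBall_self hr.le))]
  simp only [poissonExtension_eq_integral_cauchyPDFReal u (hcircle _)]
  rw [intervalIntegral_integral_swap (integrable_mul_cauchyPDFReal_prod
    (continuous_circleMap z r).measurable hcircle hu hB), smul_eq_mul, ← integral_const_mul]
  simp only [hmean]

lemma abs_cauchyPDFReal_sub_le (x x' t : ℝ) {y : NNReal} (hy : y ≠ 0) :
    |cauchyPDFReal x y t - cauchyPDFReal x' y t|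
      ≤ |x - x'| / (2 * y) * (cauchyPDFReal x y t + cauchyPDFReal x' y t) := by
  have hy' : 0 < (y : ℝ) := by positivity
  simp only [cauchyPDFReal_def]
  set a := t - x
  set b := t - x'
  have hab : x - x' = b - a := by ring
  have hfactor : π⁻¹ * y * (a ^ 2 + y ^ 2)⁻¹ - π⁻¹ * y * (b ^ 2 + (y : ℝ) ^ 2)⁻¹
      = π⁻¹ * ((a ^ 2 + y ^ 2) * (b ^ 2 + (y : ℝ) ^ 2))⁻¹ * (y * ((b + a) * (b - a))) := by
    field_simp
    ring
  have hamgm : y * |b + a| ≤ ((a ^ 2 + y ^ 2) + (b ^ 2 + y ^ 2)) / 2 := by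
    nlinarith [abs_add_le b a, sq_nonneg (|a| - y), sq_nonneg (|b| - y), sq_abs a, sq_abs b]
  rw [hfactor, hab, abs_mul, abs_mul (y : ℝ), abs_mul (b + a), abs_of_pos hy',
    abs_of_pos (by positivity)]
  calc π⁻¹ * ((a ^ 2 + y ^ 2) * (b ^ 2 + (y : ℝ) ^ 2))⁻¹ * (y * (|b + a| * |b - a|))
      ≤ π⁻¹ * ((a ^ 2 + y ^ 2) * (b ^ 2 + (y : ℝ) ^ 2))⁻¹
          * (((a ^ 2 + y ^ 2) + (b ^ 2 + y ^ 2)) / 2 * |b - a|) := by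
        rw [← mul_assoc (y : ℝ)]
        gcongr
    _ = _ := by
        field_simp
        ring

lemma lipschitzWith_poissonExtension_add_ofReal (hu : Continuous u) (hB : ∀ x, |u x| ≤ B) {z : ℂ}
    (hz : z.im ≠ 0) :
    LipschitzWith (toNNReal (B / |z.im|)) (fun x : ℝ ↦ poissonExtension u (z + x)) := by
  refine LipschitzWith.of_dist_le' fun x x' ↦ ?_
  set p : ℝ → ℝ → ℝ := fun s ↦ cauchyPDFReal (z.re + s) (nnabs z.im)
  have hscale : nnabs z.im ≠ 0 := by simpa using hz
  have hkernel (s : ℝ) : poissonExtension u (z + s) = ∫ t, u t * p s t := by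
    simpa [p] using poissonExtension_eq_integral_cauchyPDFReal u (z := z + s) (by simpa using hz)
  have hint (s : ℝ) : Integrable (fun t ↦ u t * p s t) := by
    simpa [p] using integrable_mul_cauchyPDFReal hu hB (z + s)
  have hdom : Integrable (fun t ↦ B * (|x - x'| / (2 * |z.im|) * (p x t + p x' t))) :=
    (((integrable_cauchyPDFReal _).add (integrable_cauchyPDFReal _)).const_mul _).const_mul _
  have hbound (t : ℝ) : ‖u t * p x t - u t * p x' t‖
      ≤ B * (|x - x'| / (2 * |z.im|) * (p x t + p x' t)) := by
    rw [← mul_sub, norm_mul]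
    have hdiff := abs_cauchyPDFReal_sub_le (z.re + x) (z.re + x') t hscale
    rw [add_sub_add_left_eq_sub, coe_nnabs] at hdiff
    exact mul_le_mul (hB t) hdiff (abs_nonneg _) ((abs_nonneg _).trans (hB t))
  calc dist (poissonExtension u (z + x)) (poissonExtension u (z + x'))
      = ‖∫ t, (u t * p x t - u t * p x' t)‖ := by
        rw [dist_eq_norm, hkernel, hkernel, integral_sub (hint x) (hint x')]
    _ ≤ ∫ t, B * (|x - x'| / (2 * |z.im|) * (p x t + p x' t)) :=
        norm_integral_le_of_norm_le hdom (Eventually.of_forall hbound)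
    _ = B / |z.im| * dist x x' := by
        rw [integral_const_mul, integral_const_mul,
          integral_add (integrable_cauchyPDFReal _) (integrable_cauchyPDFReal _),
          integral_cauchyPDFReal_eq_one _ hscale, integral_cauchyPDFReal_eq_one _ hscale,
          Real.dist_eq]
        field

/- Off the real line, `w - poissonExtension w - 4 * B * |im|` is subharmonic and bounded. It
vanishes on the real line, and the linear term makes it nonpositive on the lines `|im| = 1 / 2`. -/
theorem Subharmonic.le_poissonExtension_add {w : ℂ → ℝ} (hw : Subharmonic {z | |z.im| < 1} w)
    (hub : ∀ z : ℂ, |z.im| < 1 → w z ≤ B) (hlb : ∀ x : ℝ, -B ≤ w x) {z : ℂ}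
    (hz : |z.im| ≤ 1 / 2) : w z ≤ poissonExtension (fun x ↦ w x) z + 4 * B * |z.im| := by
  have hlt {y : ℝ} (hy : y ∈ Icc (-(1 / 2) : ℝ) (1 / 2)) : |y| < 1 :=
    (abs_le.2 hy).trans_lt (by norm_num)
  have hu : Continuous (fun x : ℝ ↦ w x) :=
    hw.1.comp_continuous Complex.continuous_ofReal fun x ↦ by simp
  have hB (x : ℝ) : |w x| ≤ B := abs_le.2 ⟨hlb x, hub x (by simp)⟩
  have hB0 : 0 ≤ B := (abs_nonneg _).trans (hB 0)
  have hP := abs_poissonExtension_le hB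
  have hcont := continuous_poissonExtension hu hB
  suffices w z - poissonExtension (fun x ↦ w x) z - 4 * B * |z.im| ≤ 0 by linarith
  refine Subharmonic.le_of_horizontal_strip (T := Icc (-(1 / 2)) (1 / 2))
    (w := fun z ↦ w z - poissonExtension (fun x ↦ w x) z - 4 * B * |z.im|) (C := B + B)
    (V := Ioo (-(1 / 2)) (1 / 2) \ {0}) isCompact_Icc (isOpen_Ioo.sdiff isClosed_singleton)
    (sdiff_subset.trans Ioo_subset_Icc_self)
    (((hw.1.mono fun z hz ↦ hlt hz).sub hcont.continuousOn).sub (by fun_prop)) ?_ ?_ ?_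
    (abs_le.1 hz)
  · exact (((hw.mono fun z hz ↦ hlt (Ioo_subset_Icc_self hz.1)).sub
      ((hasMeanValueProperty_poissonExtension hu hB).mono fun z hz ↦ hz.2)).sub
        ((hasMeanValueProperty_abs_im.mono fun z hz ↦ hz.2).const_mul _))
  · intro y hy
    have : 0 ≤ 4 * B * |y.im| := by positivity
    linarith [hub y (hlt hy), (abs_le.1 (hP y)).1]
  · rintro y ⟨hy, hyV⟩
    by_cases hy0 : y.im = 0
    · have hyre : (y.re : ℂ) = y := Complex.ext rfl (by simp [hy0])
      simp [poissonExtension_of_im_eq_zero _ hy0, hyre, hy0]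
    · have hy_half : |y.im| = 1 / 2 := (abs_le.2 hy).eq_of_not_lt fun h ↦ hyV ⟨abs_lt.1 h, hy0⟩
      rw [hy_half]
      linarith [hub y (hlt hy), (abs_le.1 (hP y)).1]

end PoissonExtension

/-! ### Equidistribution of Fejér averages along a Diophantine rotation -/

lemma sum_range_natCast_zmod (q : ℕ) [NeZero q] (H : ZMod q → ℝ) :
    ∑ j ∈ Finset.range q, H j = ∑ z, H z := by
  obtain ⟨n, rfl⟩ := Nat.exists_eq_succ_of_ne_zero (NeZero.ne q)
  refine (Fin.sum_univ_eq_sum_range (fun j ↦ H j) (n + 1)).symm.trans ?_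
  exact Finset.sum_congr rfl fun z _ ↦ congrArg H (Fin.cast_val_eq_self z)

lemma sum_range_comp_add_mul_rat {f : ℝ → ℝ} (hf : Function.Periodic f 1) (x : ℝ) (r : ℚ) :
    ∑ j ∈ Finset.range r.den, f (x + j * r) = ∑ j ∈ Finset.range r.den, f (x + j / r.den) := by
  have : NeZero r.den := ⟨r.den_ne_zero⟩
  let F (z : ZMod r.den) : ℝ := hf.lift (x + ZMod.toAddCircle z)
  have hF (k : ℤ) : F k = f (x + k / r.den) := by
    simp only [F, ZMod.toAddCircle_intCast, ← AddCircle.coe_add]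
    exact hf.lift_coe _
  have hunit : IsUnit ((r.num : ℤ) : ZMod r.den) :=
    (ZMod.coe_int_isUnit_iff_isCoprime _ _).2 (Rat.isCoprime_num_den r).symm
  calc ∑ j ∈ Finset.range r.den, f (x + j * r)
      = ∑ j ∈ Finset.range r.den, F ((j : ZMod r.den) * (r.num : ℤ)) := by
        refine Finset.sum_congr rfl fun j _ ↦ ?_
        have := hF (j * r.num)
        push_cast at this
        rw [this, mul_div_assoc, ← Rat.cast_def]
    _ = ∑ z, F (z * (r.num : ℤ)) := sum_range_natCast_zmod r.den fun z ↦ F (z * (r.num : ℤ))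
    _ = ∑ z, F z := Equiv.sum_comp hunit.unit.mulRight F
    _ = ∑ j ∈ Finset.range r.den, f (x + j / r.den) := by
        rw [← sum_range_natCast_zmod]
        exact Finset.sum_congr rfl fun j _ ↦ by simpa using hF j

section Equidistribution

variable {f : ℝ → ℝ} {L : NNReal}

lemma abs_mul_sub_intervalIntegral_le (hL : LipschitzWith L f) (a : ℝ) {h : ℝ} (hh : 0 ≤ h) :
    |h * f a - ∫ t in a..(a + h), f t| ≤ L * h * h := by
  have hsub : h * f a - ∫ t in a..(a + h), f t = ∫ t in a..(a + h), (f a - f t) := by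
    rw [intervalIntegral.integral_sub intervalIntegrable_const
      (hL.continuous.intervalIntegrable _ _)]
    simp
  rw [hsub, ← norm_eq_abs]
  refine (intervalIntegral.norm_integral_le_of_norm_le_const (C := L * h) fun t ht ↦ ?_).trans_eq
    (by simp [abs_of_nonneg hh])
  rw [uIoc_of_le (by linarith)] at ht
  refine (hL.dist_le_mul a t).trans (mul_le_mul_of_nonneg_left ?_ L.2)
  rw [dist_comm, Real.dist_eq, abs_of_pos (by linarith [ht.1])]
  linarith [ht.2]

lemma abs_sub_integral_le (hL : LipschitzWith L f) (hf : Function.Periodic f 1) (x : ℝ) :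
    |f x - ∫ t in (0 : ℝ)..1, f t| ≤ L := by
  have := abs_mul_sub_intervalIntegral_le hL x zero_le_one
  rw [hf.intervalIntegral_add_eq x 0] at this
  simpa using this

lemma abs_sum_equispaced_sub_integral_le (hL : LipschitzWith L f) (hf : Function.Periodic f 1)
    (x : ℝ) {q : ℕ} (hq : 0 < q) :
    |∑ j ∈ Finset.range q, (f (x + j / q) - ∫ t in (0 : ℝ)..1, f t)| ≤ L := by
  have hq' : (0 : ℝ) < q := Nat.cast_pos.2 hq
  have hsplit : ∫ t in (0 : ℝ)..1, f t
      = ∑ j ∈ Finset.range q, ∫ t in (x + j / q)..(x + j / q + 1 / q), f t := by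
    have hperiod := hf.intervalIntegral_add_eq x 0
    have hadj := intervalIntegral.sum_integral_adjacent_intervals (n := q)
      (a := fun j : ℕ ↦ x + (j : ℝ) / q) fun k _ ↦
        hL.continuous.intervalIntegrable (μ := volume) _ _
    simp only [Nat.cast_zero, zero_div, add_zero, div_self hq'.ne', hperiod, zero_add,
      Nat.cast_succ, add_div, ← add_assoc] at hadj
    exact hadj.symm
  calc |∑ j ∈ Finset.range q, (f (x + j / q) - ∫ t in (0 : ℝ)..1, f t)|
      = q * |∑ j ∈ Finset.range q,
          (1 / q * f (x + j / q) - ∫ t in (x + j / q)..(x + j / q + 1 / q), f t)| := by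
        rw [← abs_of_pos hq', ← abs_mul, abs_of_pos hq', Finset.sum_sub_distrib,
          Finset.sum_sub_distrib, ← hsplit, Finset.sum_const, Finset.card_range, nsmul_eq_mul,
          ← Finset.mul_sum]
        field_simp
    _ ≤ q * ∑ j ∈ Finset.range q, (L : ℝ) * (1 / q) * (1 / q) := by
        gcongr
        exact (Finset.abs_sum_le_sum_abs _ _).trans (Finset.sum_le_sum fun j _ ↦
          abs_mul_sub_intervalIntegral_le hL _ (by positivity))
    _ = L := by
        rw [Finset.sum_const, Finset.card_range, nsmul_eq_mul]
        field_simp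

lemma abs_sum_range_den_sub_integral_le (hL : LipschitzWith L f) (hf : Function.Periodic f 1)
    {ω : ℝ} {r : ℚ} (hr : |ω - r| ≤ 1 / (r.den : ℝ) ^ 2) (x : ℝ) :
    |∑ j ∈ Finset.range r.den, (f (x + j * ω) - ∫ t in (0 : ℝ)..1, f t)| ≤ 2 * L := by
  have : (0 : ℝ) < r.den := Nat.cast_pos.2 r.den_pos
  have hperturb : |∑ j ∈ Finset.range r.den, (f (x + j * ω) - f (x + j * r))| ≤ L := by
    calc |∑ j ∈ Finset.range r.den, (f (x + j * ω) - f (x + j * r))|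
        ≤ ∑ j ∈ Finset.range r.den, L * (1 / (r.den : ℝ)) := by
          refine (Finset.abs_sum_le_sum_abs _ _).trans (Finset.sum_le_sum fun j hj ↦ ?_)
          refine (hL.dist_le_mul _ _).trans (mul_le_mul_of_nonneg_left ?_ L.2)
          have hj' : (j : ℝ) ≤ r.den := Nat.cast_le.2 (Finset.mem_range.1 hj).le
          rw [Real.dist_eq, add_sub_add_left_eq_sub, ← mul_sub, abs_mul, Nat.abs_cast]
          calc (j : ℝ) * |ω - r| ≤ r.den * (1 / (r.den : ℝ) ^ 2) := by gcongr
            _ = 1 / r.den := by field_simp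
      _ = L := by
          rw [Finset.sum_const, Finset.card_range, nsmul_eq_mul]
          field_simp
  have hsplit : ∑ j ∈ Finset.range r.den, (f (x + j * ω) - ∫ t in (0 : ℝ)..1, f t)
      = ∑ j ∈ Finset.range r.den, (f (x + j * ω) - f (x + j * r))
        + ∑ j ∈ Finset.range r.den, (f (x + j / r.den) - ∫ t in (0 : ℝ)..1, f t) := by
    simp only [Finset.sum_sub_distrib, sum_range_comp_add_mul_rat hf]
    ring
  rw [hsplit, two_mul]
  exact (abs_add_le _ _).trans
    (add_le_add hperturb (abs_sum_equispaced_sub_integral_le hL hf x r.den_pos))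

lemma abs_birkhoff_sum_sub_integral_le_of_eq (hL : LipschitzWith L f)
    (hf : Function.Periodic f 1) {ω : ℝ} {r : ℚ} (hr : |ω - r| ≤ 1 / (r.den : ℝ) ^ 2)
    (k s : ℕ) (x : ℝ) :
    |∑ j ∈ Finset.range (r.den * k + s), (f (x + j * ω) - ∫ t in (0 : ℝ)..1, f t)|
      ≤ 2 * L * k + L * s := by
  induction k generalizing x with
  | zero =>
    calc |∑ j ∈ Finset.range (r.den * 0 + s), (f (x + j * ω) - ∫ t in (0 : ℝ)..1, f t)|
        ≤ ∑ _ ∈ Finset.range (r.den * 0 + s), (L : ℝ) :=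
          (Finset.abs_sum_le_sum_abs _ _).trans
            (Finset.sum_le_sum fun j _ ↦ abs_sub_integral_le hL hf _)
      _ = 2 * L * (0 : ℕ) + L * s := by
          simp [mul_comm]
  | succ k ih =>
    have hshift (j : ℕ) : x + ((r.den + j : ℕ) : ℝ) * ω = x + r.den * ω + j * ω := by
      push_cast
      ring
    rw [show r.den * (k + 1) + s = r.den + (r.den * k + s) by ring, Finset.sum_range_add]
    simp only [hshift]
    have hblock := abs_sum_range_den_sub_integral_le hL hf hr x
    have hrest := ih (x + r.den * ω)
    refine (abs_add_le _ _).trans ?_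
    push_cast
    linarith

theorem abs_birkhoff_sum_sub_integral_le (hL : LipschitzWith L f) (hf : Function.Periodic f 1)
    {ω : ℝ} {r : ℚ} (hr : |ω - r| ≤ 1 / (r.den : ℝ) ^ 2) (N : ℕ) (x : ℝ) :
    |∑ j ∈ Finset.range N, (f (x + j * ω) - ∫ t in (0 : ℝ)..1, f t)|
      ≤ L * (2 / r.den * N + r.den) := by
  have hdiv : ((N / r.den : ℕ) : ℝ) ≤ N / r.den := Nat.cast_div_le
  have hmod : ((N % r.den : ℕ) : ℝ) ≤ r.den := Nat.cast_le.2 (Nat.mod_lt N r.den_pos).le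
  have hsum := abs_birkhoff_sum_sub_integral_le_of_eq hL hf hr (N / r.den) (N % r.den) x
  rw [Nat.div_add_mod] at hsum
  calc _ ≤ 2 * L * ((N / r.den : ℕ) : ℝ) + L * ((N % r.den : ℕ) : ℝ) := hsum
    _ ≤ 2 * L * (N / r.den) + L * r.den := by gcongr
    _ = L * (2 / r.den * N + r.den) := by ring

end Equidistribution

/-- The weights `(M - |m|) / M²`, `|m| < M`, of the Fejér average of length `M`. -/
noncomputable def fejerWeight (M : ℕ) (m : ℤ) : ℝ := (M - |(m : ℝ)|) / (M : ℝ) ^ 2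

/-- The Fejér average of `f` along the orbit `x + m • ω`, `|m| < M`, of a translation. The ambient
group is `ℝ` for the function on the line and `ℂ` for its subharmonic extension. -/
noncomputable def fejerAverage {E : Type*} [AddGroup E] (M : ℕ) (ω : E) (f : E → ℝ) (x : E) : ℝ :=
  ∑ m ∈ Finset.Icc (-(M : ℤ) + 1) (M - 1), fejerWeight M m * f (x + m • ω)

lemma sum_Icc_sub_abs_mul (M : ℕ) (g : ℤ → ℝ) :
    ∑ m ∈ Finset.Icc (-(M : ℤ) + 1) (M - 1), (M - |(m : ℝ)|) * g m
      = ∑ n ∈ Finset.range M, ∑ m ∈ Finset.Icc (-(n : ℤ)) n, g m := by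
  induction M with
  | zero => simp
  | succ M ih =>
    have hend : ∑ m ∈ Finset.Icc (-(M : ℤ) + 1) (M - 1), (M - |(m : ℝ)|) * g m
        = ∑ m ∈ Finset.Icc (-(M : ℤ)) M, (M - |(m : ℝ)|) * g m := by
      refine Finset.sum_subset (Finset.Icc_subset_Icc (by lia) (by lia)) fun m hm hm' ↦ ?_
      simp only [Finset.mem_Icc] at hm hm'
      have habs : |m| = M := by rcases abs_cases m with h | h <;> lia
      have habs' : |(m : ℝ)| = M := by exact_mod_cast habs
      rw [habs', sub_self, zero_mul]
    rw [Finset.sum_range_succ, ← ih, hend, ← Finset.sum_add_distrib]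
    refine Finset.sum_congr (by congr 1 <;> push_cast <;> ring) fun m _ ↦ ?_
    push_cast
    ring

lemma sum_Icc_neg_self (n : ℕ) (g : ℤ → ℝ) :
    ∑ m ∈ Finset.Icc (-(n : ℤ)) n, g m = ∑ j ∈ Finset.range (2 * n + 1), g (j - n) := by
  rw [Int.Icc_eq_finset_map, Finset.sum_map, show (n + 1 - -(n : ℤ)).toNat = 2 * n + 1 by lia]
  refine Finset.sum_congr rfl fun j _ ↦ ?_
  simp [neg_add_eq_sub]

lemma sum_fejerWeight_mul (M : ℕ) (g : ℤ → ℝ) :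
    ∑ m ∈ Finset.Icc (-(M : ℤ) + 1) (M - 1), fejerWeight M m * g m
      = (∑ n ∈ Finset.range M, ∑ j ∈ Finset.range (2 * n + 1), g (j - n)) / (M : ℝ) ^ 2 := by
  simp only [← sum_Icc_neg_self, ← sum_Icc_sub_abs_mul, Finset.sum_div, fejerWeight]
  exact Finset.sum_congr rfl fun m _ ↦ by ring

lemma sum_range_two_mul_add_one (M : ℕ) :
    ∑ n ∈ Finset.range M, ((2 * n + 1 : ℕ) : ℝ) = (M : ℝ) ^ 2 := by
  induction M with
  | zero => simp
  | succ M ih =>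
    rw [Finset.sum_range_succ, ih]
    push_cast
    ring

lemma sum_fejerWeight {M : ℕ} (hM : 0 < M) :
    ∑ m ∈ Finset.Icc (-(M : ℤ) + 1) (M - 1), fejerWeight M m = 1 := by
  have hM' : (M : ℝ) ^ 2 ≠ 0 := by positivity
  have hsum := sum_fejerWeight_mul M fun _ ↦ 1
  simp only [mul_one, Finset.sum_const, Finset.card_range, nsmul_eq_mul,
    sum_range_two_mul_add_one, div_self hM'] at hsum
  exact hsum

lemma fejerWeight_nonneg {M : ℕ} {m : ℤ} (hm : m ∈ Finset.Icc (-(M : ℤ) + 1) (M - 1)) :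
    0 ≤ fejerWeight M m := by
  rw [Finset.mem_Icc] at hm
  have habs : |m| ≤ M := abs_le.2 ⟨by lia, by lia⟩
  have habs' : |(m : ℝ)| ≤ M := by exact_mod_cast habs
  exact div_nonneg (sub_nonneg.2 habs') (by positivity)

lemma fejerAverage_sub_const {E : Type*} [AddGroup E] {M : ℕ} (hM : 0 < M) (ω : E) (f : E → ℝ)
    (a : ℝ) (x : E) : fejerAverage M ω (fun y ↦ f y - a) x = fejerAverage M ω f x - a := by
  simp only [fejerAverage, mul_sub, Finset.sum_sub_distrib, ← Finset.sum_mul, sum_fejerWeight hM,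
    one_mul]

lemma abs_fejerAverage_sub_integral_le_of_rat {f : ℝ → ℝ} {L : NNReal} (hL : LipschitzWith L f)
    (hf : Function.Periodic f 1) {ω : ℝ} {r : ℚ} (hr : |ω - r| ≤ 1 / (r.den : ℝ) ^ 2) {M : ℕ}
    (hM : 0 < M) (x : ℝ) :
    |fejerAverage M ω f x - ∫ t in (0 : ℝ)..1, f t| ≤ L * (2 / r.den + r.den / M) := by
  have hM' : (0 : ℝ) < M := Nat.cast_pos.2 hM
  rw [← fejerAverage_sub_const hM, fejerAverage,
    sum_fejerWeight_mul M fun m ↦ f (x + m • ω) - ∫ t in (0 : ℝ)..1, f t, abs_div,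
    abs_of_pos (pow_pos hM' 2), div_le_iff₀ (pow_pos hM' 2)]
  have hinner (n : ℕ) : |∑ j ∈ Finset.range (2 * n + 1),
      (f (x + ((j : ℤ) - n) • ω) - ∫ t in (0 : ℝ)..1, f t)|
        ≤ L * (2 / r.den * ((2 * n + 1 : ℕ) : ℝ) + r.den) := by
    have hshift (j : ℕ) : x + ((j : ℤ) - n) • ω = x - n * ω + j * ω := by
      rw [zsmul_eq_mul]
      push_cast
      ring
    simpa only [hshift] using
      abs_birkhoff_sum_sub_integral_le hL hf hr (2 * n + 1) (x - n * ω)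
  calc _ ≤ ∑ n ∈ Finset.range M, L * (2 / r.den * ((2 * n + 1 : ℕ) : ℝ) + r.den) :=
        (Finset.abs_sum_le_sum_abs _ _).trans (Finset.sum_le_sum fun n _ ↦ hinner n)
    _ = L * (2 / r.den + r.den / M) * (M : ℝ) ^ 2 := by
        rw [← Finset.mul_sum, Finset.sum_add_distrib, ← Finset.mul_sum,
          sum_range_two_mul_add_one, Finset.sum_const, Finset.card_range, nsmul_eq_mul]
        field_simp

lemma one_div_den_le_of_isDC {c A ω : ℝ} (hc : 0 < c) (hA : 0 < A) (hω : IsDC c A ω) {Q : ℝ}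
    (hQ : 0 < Q) {r : ℚ} (hr : |ω - r| ≤ 1 / (Q * r.den)) :
    1 / (r.den : ℝ) ≤ (c * Q) ^ (-(1 / A)) := by
  have hq : (0 : ℝ) < r.den := Nat.cast_pos.2 r.den_pos
  have hdist : distToInt ((r.den : ℤ) * ω) ≤ 1 / Q := by
    calc distToInt ((r.den : ℤ) * ω) ≤ |(r.den : ℤ) * ω - r.num| := round_le _ r.num
      _ = r.den * |ω - r| := by
          rw [← abs_of_pos hq, ← abs_mul, mul_sub, Rat.cast_def,
            mul_div_cancel₀ _ hq.ne', Int.cast_natCast]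
      _ ≤ r.den * (1 / (Q * r.den)) := by gcongr
      _ = 1 / Q := by field_simp
  have hdio := (hω r.den (Int.natCast_ne_zero.2 r.den_ne_zero)).trans_le hdist
  rw [Int.cast_natCast, Nat.abs_cast, rpow_neg hq.le, ← div_eq_mul_inv,
    div_lt_div_iff₀ (rpow_pos_of_pos hq A) hQ, one_mul] at hdio
  have hroot : (c * Q) ^ (1 / A) ≤ r.den := by
    rw [one_div, rpow_inv_le_iff_of_pos (mul_pos hc hQ).le hq.le hA]
    exact hdio.le
  rw [rpow_neg (mul_pos hc hQ).le, ← one_div]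
  exact one_div_le_one_div_of_le (rpow_pos_of_pos (mul_pos hc hQ) _) hroot

theorem abs_fejerAverage_sub_integral_le_of_isDC {c A ω : ℝ} (hc : 0 < c) (hA : 1 ≤ A)
    (hω : IsDC c A ω) {f : ℝ → ℝ} {L : NNReal} (hL : LipschitzWith L f)
    (hf : Function.Periodic f 1) {M : ℕ} (hM : 0 < M) (x : ℝ) :
    |fejerAverage M ω f x - ∫ t in (0 : ℝ)..1, f t|
      ≤ L * ((2 * c ^ (-(1 / A)) + 1) * (M : ℝ) ^ (-(1 / (2 * A)))) := by
  have hM' : (0 : ℝ) < M := Nat.cast_pos.2 hM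
  obtain ⟨r, hr, hden⟩ := exists_rat_abs_sub_le_and_den_le ω (Nat.sqrt_pos.2 hM)
  have : (0 : ℝ) < r.den := Nat.cast_pos.2 r.den_pos
  have hden' : (r.den : ℝ) ≤ √M := (Nat.cast_le.2 hden).trans nat_sqrt_le_real_sqrt
  have hr' : |ω - r| ≤ 1 / (√M * r.den) := by
    refine hr.trans (one_div_le_one_div_of_le (by positivity) ?_)
    gcongr
    exact real_sqrt_le_nat_sqrt_succ
  have hsmall : 1 / (r.den : ℝ) ≤ c ^ (-(1 / A)) * (M : ℝ) ^ (-(1 / (2 * A))) := by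
    refine (one_div_den_le_of_isDC hc (by positivity) hω (sqrt_pos.2 hM') hr').trans_eq ?_
    rw [mul_rpow hc.le (sqrt_nonneg _), sqrt_eq_rpow, ← rpow_mul hM'.le]
    congr 2
    field_simp
  have hlarge : r.den / (M : ℝ) ≤ (M : ℝ) ^ (-(1 / (2 * A))) := by
    calc r.den / (M : ℝ) ≤ √M / M := by gcongr
      _ = (M : ℝ) ^ (-(1 / 2) : ℝ) := by
          rw [sqrt_div_self', sqrt_eq_rpow, rpow_neg hM'.le, one_div]
      _ ≤ (M : ℝ) ^ (-(1 / (2 * A))) := by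
          refine rpow_le_rpow_of_exponent_le (Nat.one_le_cast.2 hM) (neg_le_neg ?_)
          exact one_div_le_one_div_of_le two_pos (by linarith)
  refine (abs_fejerAverage_sub_integral_le_of_rat hL hf (hr'.trans ?_) hM x).trans ?_
  · rw [sq]
    gcongr
  · refine mul_le_mul_of_nonneg_left ?_ L.2
    linear_combination 2 * hsmall + hlarge

/-! ### Upper bounds for Fejér averages of subharmonic functions -/

lemma fejerAverage_le_add_const {E : Type*} [AddGroup E] {M : ℕ} (hM : 0 < M) {ω x : E}
    {f g : E → ℝ} {a : ℝ} (hfg : ∀ m : ℤ, f (x + m • ω) ≤ g (x + m • ω) + a) :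
    fejerAverage M ω f x ≤ fejerAverage M ω g x + a := by
  rw [← sub_neg_eq_add, ← fejerAverage_sub_const hM]
  refine Finset.sum_le_sum fun m hm ↦ mul_le_mul_of_nonneg_left ?_ (fejerWeight_nonneg hm)
  exact (hfg m).trans_eq (sub_neg_eq_add _ _).symm

lemma fejerAverage_ofReal (M : ℕ) (ω : ℝ) (f : ℂ → ℝ) (z : ℂ) :
    fejerAverage M (ω : ℂ) f z = fejerAverage M ω (fun x : ℝ ↦ f (z + x)) 0 := by
  simp [fejerAverage]

lemma add_zsmul_ofReal_im (z : ℂ) (m : ℤ) (ω : ℝ) : (z + m • (ω : ℂ)).im = z.im := by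
  simp

lemma Subharmonic.fejerAverage_horizontal {U : Set ℝ} {w : ℂ → ℝ}
    (hw : Subharmonic (Complex.im ⁻¹' U) w) (M : ℕ) (ω : ℝ) :
    Subharmonic (Complex.im ⁻¹' U) (fejerAverage M (ω : ℂ) w) := by
  refine Subharmonic.sum fun m hm ↦
    ((hw.comp_add_const (m • (ω : ℂ))).mono ?_).const_mul (fejerWeight_nonneg hm)
  intro z hz
  simpa only [mem_preimage, add_zsmul_ofReal_im] using hz

lemma Subharmonic.continuous_comp_ofReal {w : ℂ → ℝ} (hw : Subharmonic {z | |z.im| < 1} w) :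
    Continuous (fun x : ℝ ↦ w x) :=
  hw.1.comp_continuous Complex.continuous_ofReal fun x ↦ by simp

section UpperBound

variable {c A ω B ρ : ℝ} {w : ℂ → ℝ} {M : ℕ} {z : ℂ}

lemma Subharmonic.fejerAverage_le_of_abs_im_eq (hc : 0 < c) (hA : 1 ≤ A) (hω : IsDC c A ω)
    (hw : Subharmonic {z | |z.im| < 1} w) (hper : Function.Periodic (fun x : ℝ ↦ w x) 1)
    (hub : ∀ z : ℂ, |z.im| < 1 → w z ≤ B) (hlb : ∀ x : ℝ, -B ≤ w x) (hM : 0 < M) (hρ : 0 < ρ)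
    (hρ' : ρ ≤ 1 / 2) (hz : |z.im| = ρ) :
    fejerAverage M (ω : ℂ) w z ≤ (∫ x in (0 : ℝ)..1, w x)
      + B / ρ * ((2 * c ^ (-(1 / A)) + 1) * (M : ℝ) ^ (-(1 / (2 * A)))) + 4 * B * ρ := by
  have hcont := hw.continuous_comp_ofReal
  have hbound (x : ℝ) : |w x| ≤ B := abs_le.2 ⟨hlb x, hub x (by simp)⟩
  have hB : 0 ≤ B := (abs_nonneg _).trans (hbound 0)
  have hmajor (m : ℤ) : w (z + m • (ω : ℂ))
      ≤ poissonExtension (fun x ↦ w x) (z + m • (ω : ℂ)) + 4 * B * ρ := by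
    rw [← hz, ← add_zsmul_ofReal_im z m ω]
    exact hw.le_poissonExtension_add hub hlb (by rwa [add_zsmul_ofReal_im, hz])
  have hlip := lipschitzWith_poissonExtension_add_ofReal hcont hbound
    (abs_pos.1 (hz.symm ▸ hρ))
  have hequi := abs_fejerAverage_sub_integral_le_of_isDC hc hA hω hlip
    (periodic_poissonExtension_add_ofReal hper z) hM 0
  rw [intervalIntegral_poissonExtension_add_ofReal hcont hbound hper, ← fejerAverage_ofReal,
    hz, coe_toNNReal _ (by positivity)] at hequi
  linarith [fejerAverage_le_add_const hM hmajor, le_of_abs_le hequi]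

theorem Subharmonic.fejerAverage_le (hc : 0 < c) (hA : 1 ≤ A) (hω : IsDC c A ω)
    (hw : Subharmonic {z | |z.im| < 1} w) (hper : Function.Periodic (fun x : ℝ ↦ w x) 1)
    (hub : ∀ z : ℂ, |z.im| < 1 → w z ≤ B) (hlb : ∀ x : ℝ, -B ≤ w x) (hM : 0 < M) (hρ : 0 < ρ)
    (hρ' : ρ ≤ 1 / 2) (hz : |z.im| ≤ ρ) :
    fejerAverage M (ω : ℂ) w z ≤ (∫ x in (0 : ℝ)..1, w x)
      + B / ρ * ((2 * c ^ (-(1 / A)) + 1) * (M : ℝ) ^ (-(1 / (2 * A)))) + 4 * B * ρ := by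
  have hsub : Subharmonic {z | |z.im| < 1} (fejerAverage M (ω : ℂ) w) :=
    Subharmonic.fejerAverage_horizontal (U := {y | |y| < 1}) hw M ω
  have hstrip {z : ℂ} (hz : |z.im| ≤ ρ) : |z.im| < 1 := by linarith
  refine Subharmonic.le_of_horizontal_strip (T := {y | |y| ≤ ρ}) (V := {y | |y| < ρ}) (C := B)
    ?_ ?_ ?_ ?_ ?_ ?_ ?_ hz
  · simpa [Real.closedBall_eq_Icc, closedBall, Real.dist_eq] using isCompact_closedBall (0 : ℝ) ρ
  · exact isOpen_lt continuous_abs continuous_const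
  · exact fun y (hy : |y| < ρ) ↦ hy.le
  · exact hsub.1.mono fun z hz ↦ hstrip hz
  · exact hsub.mono fun z hz ↦ hstrip (le_of_lt hz)
  · intro z hz
    have hle := fejerAverage_le_add_const (f := w) (g := 0) (x := z) (ω := (ω : ℂ)) (a := B) hM
      fun m ↦ by simpa using hub (z + m • (ω : ℂ)) (by simpa using hstrip hz)
    simpa [fejerAverage] using hle
  · rintro z ⟨hle, hlt⟩
    exact hw.fejerAverage_le_of_abs_im_eq hc hA hω hper hub hlb hM hρ hρ'
      (le_antisymm hle (not_lt.1 hlt))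

end UpperBound

/-! ### The logarithmic potential of a compact set of reals -/

/-- The logarithmic potential of Lebesgue measure on `E ⊆ ℝ`. -/
noncomputable def logPotential (E : Set ℝ) (z : ℂ) : ℝ := ∫ t in E, log ‖z - t‖

section LogPotential

variable {E : Set ℝ}

lemma integrableOn_log_norm_sub_ofReal (hE : IsCompact E) (z : ℂ) :
    IntegrableOn (fun t : ℝ ↦ log ‖z - t‖) E := by
  obtain ⟨R, hR⟩ := hE.isBounded.subset_closedBall 0
  have hmero : MeromorphicOn (fun t : ℝ ↦ z - t) (uIcc (-R) R) := fun t _ ↦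
    (analyticAt_const.sub (Complex.ofRealCLM.analyticAt t)).meromorphicAt
  refine ((intervalIntegrable_iff' (by simp)).1 hmero.intervalIntegrable_log_norm).mono_set ?_
  rw [Real.closedBall_eq_Icc, zero_sub, zero_add] at hR
  exact hR.trans Icc_subset_uIcc

lemma continuous_log_max_norm_sub_ofReal {d : ℝ} (hd : 0 < d) :
    Continuous fun p : ℂ × ℝ ↦ log (max ‖p.1 - p.2‖ d) :=
  Continuous.log (by fun_prop) fun _ ↦ (lt_max_of_lt_right hd).ne'

lemma integrableOn_log_max_norm_sub_ofReal (hE : IsCompact E) {d : ℝ} (hd : 0 < d) (z : ℂ) :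
    IntegrableOn (fun t : ℝ ↦ log (max ‖z - t‖ d)) E :=
  ((continuous_log_max_norm_sub_ofReal hd).comp (by fun_prop : Continuous fun t : ℝ ↦ (z, t))
    ).continuousOn.integrableOn_compact hE

lemma ae_abs_re_sub_pos (z : ℂ) : ∀ᵐ t : ℝ, 0 < |z.re - t| := by
  filter_upwards [Measure.ae_ne volume z.re] with t ht
  exact abs_pos.2 (sub_ne_zero.2 ht.symm)

lemma abs_re_sub_le_norm_sub_ofReal (z : ℂ) (t : ℝ) : |z.re - t| ≤ ‖z - t‖ := by
  simpa using Complex.abs_re_le_norm (z - t)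

lemma integrableOn_log_sub_log_abs_sub (x d : ℝ) :
    IntegrableOn (fun t ↦ log d - log |x - t|) (Icc (x - d) (x + d)) := by
  have := integrableOn_log_norm_sub_ofReal (isCompact_Icc (a := x - d) (b := x + d)) x
  simp only [← Complex.ofReal_sub, Complex.norm_real, norm_eq_abs] at this
  exact (integrableOn_const isCompact_Icc.measure_lt_top.ne).sub this

lemma setIntegral_log_sub_log_abs_sub (x : ℝ) {d : ℝ} (hd : 0 ≤ d) :
    ∫ t in Icc (x - d) (x + d), (log d - log |x - t|) = 2 * d := by
  rw [integral_Icc_eq_integral_Ioc, ← intervalIntegral.integral_of_le (by linarith)]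
  simp only [log_abs]
  rw [intervalIntegral.integral_comp_sub_left (fun s ↦ log d - log s),
    intervalIntegral.integral_sub intervalIntegrable_const intervalIntegral.intervalIntegrable_log',
    integral_log, intervalIntegral.integral_const, sub_sub_cancel, sub_add_cancel_left,
    log_neg_eq_log, smul_eq_mul]
  ring

lemma setIntegral_log_max_le_logPotential_add (hE : IsCompact E) {d : ℝ} (hd : 0 < d) (z : ℂ) :
    ∫ t in E, log (max ‖z - t‖ d) ≤ logPotential E z + 2 * d := by
  have hint := integrableOn_log_sub_log_abs_sub z.re d
  set S := Icc (z.re - d) (z.re + d)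
  set φ : ℝ → ℝ := S.indicator fun t ↦ log d - log |z.re - t|
  have hφ : Integrable φ := hint.integrable_indicator measurableSet_Icc
  have hφ_nonneg : 0 ≤ᵐ[volume] φ := by
    filter_upwards [ae_abs_re_sub_pos z] with t ht
    refine indicator_apply_nonneg fun htS ↦ sub_nonneg.2 (log_le_log ht ?_)
    exact abs_le.2 ⟨by linarith [htS.2], by linarith [htS.1]⟩
  have hpoint : ∀ᵐ t : ℝ, log (max ‖z - t‖ d) ≤ log ‖z - t‖ + φ t := by
    filter_upwards [ae_abs_re_sub_pos z, hφ_nonneg] with t ht hφt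
    have hre := abs_re_sub_le_norm_sub_ofReal z t
    rcases le_total d ‖z - t‖ with hfar | hnear
    · rw [max_eq_left hfar]
      exact le_add_of_nonneg_right hφt
    · have htS : t ∈ S := by
        have := abs_le.1 (hre.trans hnear)
        exact ⟨by linarith, by linarith⟩
      rw [max_eq_right hnear, show φ t = log d - log |z.re - t| from indicator_of_mem htS _]
      linarith [log_le_log ht hre]
  calc ∫ t in E, log (max ‖z - t‖ d) ≤ ∫ t in E, (log ‖z - t‖ + φ t) :=
        setIntegral_mono_ae (integrableOn_log_max_norm_sub_ofReal hE hd z)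
          ((integrableOn_log_norm_sub_ofReal hE z).add hφ.integrableOn) hpoint
    _ = logPotential E z + ∫ t in E, φ t :=
        integral_add (integrableOn_log_norm_sub_ofReal hE z) hφ.integrableOn
    _ ≤ logPotential E z + ∫ t, φ t := by
        grw [setIntegral_le_integral hφ hφ_nonneg]
    _ = logPotential E z + 2 * d := by
        rw [integral_indicator measurableSet_Icc, setIntegral_log_sub_log_abs_sub _ hd.le]

lemma logPotential_le_setIntegral_log_max (hE : IsCompact E) {d : ℝ} (hd : 0 < d) (z : ℂ) :
    logPotential E z ≤ ∫ t in E, log (max ‖z - t‖ d) := by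
  refine setIntegral_mono_ae (integrableOn_log_norm_sub_ofReal hE z)
    (integrableOn_log_max_norm_sub_ofReal hE hd z) ?_
  filter_upwards [ae_abs_re_sub_pos z] with t ht
  exact log_le_log (ht.trans_le (abs_re_sub_le_norm_sub_ofReal z t)) (le_max_left _ _)

lemma continuous_logPotential (hE : IsCompact E) : Continuous (logPotential E) := by
  refine continuous_of_uniform_approx_of_continuous fun u hu ↦ ?_
  obtain ⟨ε, hε, hεu⟩ := Metric.mem_uniformity_dist.1 hu
  have hd : 0 < ε / 3 := by positivity
  refine ⟨fun z ↦ ∫ t in E, log (max ‖z - t‖ (ε / 3)),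
    continuous_parametric_integral_of_continuous (continuous_log_max_norm_sub_ofReal hd) hE,
    fun z ↦ hεu ?_⟩
  rw [Real.dist_eq, abs_lt]
  constructor <;> linarith [setIntegral_log_max_le_logPotential_add hE hd z,
    logPotential_le_setIntegral_log_max hE hd z]

lemma hasMeanValueProperty_log_norm_sub (a : ℂ) :
    HasMeanValueProperty {a}ᶜ (fun z ↦ log ‖z - a‖) :=
  .of_harmonicOnNhd fun z hz ↦ AnalyticAt.harmonicAt_log_norm (f := fun z ↦ z - a) (by fun_prop)
    (sub_ne_zero.2 hz)

lemma hasMeanValueProperty_logPotential (hE : IsCompact E) :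
    HasMeanValueProperty (Complex.ofReal '' E)ᶜ (logPotential E) := by
  refine ⟨(continuous_logPotential hE).continuousOn, fun z r hr hball ↦ ?_⟩
  have hne {y : ℂ} (hy : y ∈ closedBall z r) {t : ℝ} (ht : t ∈ E) : y ≠ t := fun h ↦
    hball hy ⟨t, ht, h.symm⟩
  have hint : IntegrableOn (Function.uncurry fun θ t : ℝ ↦ log ‖circleMap z r θ - t‖)
      (uIcc 0 (2 * π) ×ˢ E) (volume.prod volume) := by
    refine ContinuousOn.integrableOn_compact (isCompact_uIcc.prod hE) ?_
    refine ContinuousOn.log (by fun_prop) fun p hp ↦ norm_ne_zero_iff.2 (sub_ne_zero.2 ?_)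
    exact hne (circleMap_mem_closedBall z hr.le p.1) hp.2
  simp only [circleAverage_def, logPotential]
  rw [intervalIntegral_integral_swap, ← integral_smul]
  · exact setIntegral_congr_fun hE.measurableSet fun t ht ↦
      (hasMeanValueProperty_log_norm_sub t).2 z r hr fun y hy ↦ hne hy ht
  · rw [Measure.prod_restrict]
    exact hint.mono_set (prod_mono_left uIoc_subset_uIcc)

lemma log_le_inv_volume_mul_logPotential (hE : IsCompact E) (hvol : 0 < volume.real E) {z : ℂ}
    {R : ℝ} (hR : 0 < R) (hER : ∀ t ∈ E, R ≤ ‖z - t‖) :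
    log R ≤ (volume.real E)⁻¹ * logPotential E z := by
  rw [le_inv_mul_iff₀ hvol, ← smul_eq_mul, ← setIntegral_const]
  exact setIntegral_mono_on (integrableOn_const hE.measure_lt_top.ne)
    (integrableOn_log_norm_sub_ofReal hE z) hE.measurableSet fun t ht ↦ log_le_log hR (hER t ht)

lemma inv_volume_mul_logPotential_le_log (hE : IsCompact E) (hvol : 0 < volume.real E) {z : ℂ}
    {R : ℝ} (hR : 0 < R) (hER : ∀ t ∈ E, ‖z - t‖ ≤ R) :
    (volume.real E)⁻¹ * logPotential E z ≤ log R := by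
  rw [inv_mul_le_iff₀ hvol]
  refine (logPotential_le_setIntegral_log_max hE hR z).trans_eq ?_
  rw [← smul_eq_mul, ← setIntegral_const]
  exact setIntegral_congr_fun hE.measurableSet fun t ht ↦ by simp only [max_eq_right (hER t ht)]

theorem log_volume_sub_two_le_inv_volume_mul_logPotential (hE : IsCompact E)
    (hvol : 0 < volume.real E) (z : ℂ) :
    log (volume.real E) - 2 ≤ (volume.real E)⁻¹ * logPotential E z := by
  have hmax : volume.real E * log (volume.real E)
      ≤ ∫ t in E, log (max ‖z - t‖ (volume.real E)) := by
    rw [← smul_eq_mul, ← setIntegral_const]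
    exact setIntegral_mono (integrableOn_const hE.measure_lt_top.ne)
      (integrableOn_log_max_norm_sub_ofReal hE hvol z) fun t ↦
        log_le_log hvol (le_max_right _ _)
  rw [le_inv_mul_iff₀ hvol]
  linarith [setIntegral_log_max_le_logPotential_add hE hvol z]

end LogPotential

/-! ### The set where a subharmonic function is very negative -/

lemma dist_ofReal_ofReal (x y : ℝ) : dist (x : ℂ) y = dist x y :=
  Complex.isometry_ofReal.dist_eq x y

/- A two-constants estimate, with the logarithmic potential of `E` as barrier: on the sphere it
exceeds its values near `E`, and on `E` it is bounded below in terms of the length of `E` alone. -/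
theorem Subharmonic.le_of_le_on_sphere_of_le_on_compact {v : ℂ → ℝ} {a ρ ε κ : ℝ} (hρ : 0 < ρ)
    (hκ : 0 ≤ κ) (hcont : ContinuousOn v (closedBall (a : ℂ) ρ))
    (hv : Subharmonic (ball (a : ℂ) ρ) v) (hsphere : ∀ z ∈ sphere (a : ℂ) ρ, v z ≤ ε) {E : Set ℝ}
    (hE : IsCompact E) (hEa : E ⊆ closedBall a (ρ / 4)) (hvol : 0 < volume.real E)
    (hvE : ∀ t ∈ E, v t ≤ ε - κ * (2 + log (3 * ρ / 4 / volume.real E))) {x : ℝ}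
    (hx : x ∈ closedBall a (ρ / 4)) : v x ≤ ε - κ * log (3 / 2) := by
  have hdist {t : ℝ} (ht : t ∈ closedBall a (ρ / 4)) : dist (t : ℂ) a ≤ ρ / 4 :=
    (dist_ofReal_ofReal t a).trans_le ht
  let q (z : ℂ) : ℝ := (volume.real E)⁻¹ * logPotential E z
  have hqE (t : ℝ) : log (volume.real E) - 2 ≤ q t :=
    log_volume_sub_two_le_inv_volume_mul_logPotential hE hvol t
  have hq_sphere {z : ℂ} (hz : dist z a = ρ) : log (3 * ρ / 4) ≤ q z :=
    log_le_inv_volume_mul_logPotential hE hvol (by positivity) fun t ht ↦ by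
      linarith [dist_triangle z t a, hdist (hEa ht), Complex.dist_eq z t]
  have hqx : q x ≤ log (ρ / 2) :=
    inv_volume_mul_logPotential_le_log hE hvol (by positivity) fun t ht ↦ by
      linarith [dist_triangle_right (x : ℂ) t a, hdist (hEa ht), hdist hx, Complex.dist_eq x t]
  have hmax : v x - κ * q x ≤ ε - κ * log (3 * ρ / 4) := by
    refine Subharmonic.le_of_isCompact (w := fun z ↦ v z - κ * q z)
      (isCompact_closedBall (a : ℂ) ρ)
      (isOpen_ball.sdiff (hE.image Complex.continuous_ofReal).isClosed)
      (sdiff_subset.trans ball_subset_closedBall)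
      (hcont.sub (((continuous_logPotential hE).const_mul _).const_mul _).continuousOn)
      ((hv.mono sdiff_subset).sub
        ((((hasMeanValueProperty_logPotential hE).mono fun z hz ↦ hz.2).const_mul _).const_mul _))
      ?_ (mem_closedBall.2 (by linarith [hdist hx]))
    rintro z ⟨hz, hzV⟩
    by_cases hzE : z ∈ Complex.ofReal '' E
    · obtain ⟨t, ht, rfl⟩ := hzE
      have hvt := hvE t ht
      rw [log_div (by positivity) hvol.ne'] at hvt
      linarith [mul_le_mul_of_nonneg_left (hqE t) hκ]
    · have hzρ : dist z a = ρ := le_antisymm hz (not_lt.1 fun hlt ↦ hzV ⟨hlt, hzE⟩)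
      linarith [hsphere z hzρ, mul_le_mul_of_nonneg_left (hq_sphere hzρ) hκ]
  have hlog : log (3 * ρ / 4) = log (3 / 2) + log (ρ / 2) := by
    rw [← log_mul (by norm_num) (by positivity)]
    ring_nf
  rw [hlog] at hmax
  linarith [mul_le_mul_of_nonneg_left hqx hκ]

lemma intervalIntegral_le_of_le_on_Icc {f : ℝ → ℝ} (hf : Continuous f)
    (hper : Function.Periodic f 1) {a s m m' : ℝ} (hs : 0 ≤ s) (hs' : s ≤ 1)
    (hm : ∀ x ∈ Icc a (a + s), f x ≤ m) (hm' : ∀ x, f x ≤ m') :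
    ∫ x in (0 : ℝ)..1, f x ≤ s * m + (1 - s) * m' := by
  have hsplit : ∫ x in (0 : ℝ)..1, f x
      = (∫ x in a..(a + s), f x) + ∫ x in (a + s)..(a + 1), f x := by
    rw [intervalIntegral.integral_add_adjacent_intervals (hf.intervalIntegrable _ _)
      (hf.intervalIntegrable _ _), hper.intervalIntegral_add_eq a 0, zero_add]
  have hleft : ∫ x in a..(a + s), f x ≤ ∫ _ in a..(a + s), m :=
    intervalIntegral.integral_mono_on (by linarith) (hf.intervalIntegrable _ _)
      intervalIntegrable_const hm
  have hright : ∫ x in (a + s)..(a + 1), f x ≤ ∫ _ in (a + s)..(a + 1), m' :=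
    intervalIntegral.integral_mono_on (by linarith) (hf.intervalIntegrable _ _)
      intervalIntegrable_const fun x _ ↦ hm' x
  rw [intervalIntegral.integral_const, smul_eq_mul] at hleft hright
  rw [hsplit]
  linarith

section SublevelSet

variable {v : ℂ → ℝ} {β ρ : ℝ}

lemma Subharmonic.volume_closedBall_inter_le (hv : Subharmonic {z | |z.im| < 1} v)
    (hper : Function.Periodic (fun x : ℝ ↦ v x) 1) (hmean : ∫ x in (0 : ℝ)..1, v x = 0)
    (hβ : 0 < β) (hρ : 0 < ρ) (hρ' : ρ < 1) (hstrip : ∀ z : ℂ, |z.im| ≤ ρ → v z ≤ β)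
    (hreal : ∀ x : ℝ, v x ≤ β * ρ) (lam a : ℝ) :
    volume.real (closedBall a (ρ / 4) ∩ {x : ℝ | v x ≤ -lam})
      ≤ 3 * ρ / 4 * exp (2 - lam / (9 * β)) := by
  set E := closedBall a (ρ / 4) ∩ {x : ℝ | v x ≤ -lam}
  have hcont := hv.continuous_comp_ofReal
  have hE : IsCompact E :=
    (isCompact_closedBall a _).inter_right (isClosed_le hcont continuous_const)
  have him {z : ℂ} (hz : z ∈ closedBall (a : ℂ) ρ) : |z.im| ≤ ρ := by
    refine le_trans ?_ (mem_closedBall.1 hz)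
    simpa [Complex.dist_eq] using Complex.abs_im_le_norm (z - a)
  by_contra! hlarge
  have hvol : 0 < volume.real E := lt_trans (by positivity) hlarge
  have hshort : 2 + log (3 * ρ / 4 / volume.real E) < lam / (9 * β) := by
    have := log_lt_log (by positivity) hlarge
    rw [log_mul (by positivity) (exp_ne_zero _), log_exp] at this
    rw [log_div (by positivity) hvol.ne']
    linarith
  rw [lt_div_iff₀ (by positivity)] at hshort
  have hstrip' : closedBall (a : ℂ) ρ ⊆ {z | |z.im| < 1} := fun z hz ↦ (him hz).trans_lt hρ'
  have hneg {x : ℝ} (hx : x ∈ closedBall a (ρ / 4)) : v x ≤ -2 * β := by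
    have htwo := Subharmonic.le_of_le_on_sphere_of_le_on_compact (κ := 9 * β) hρ (by positivity)
      (hv.1.mono hstrip') (hv.mono (ball_subset_closedBall.trans hstrip'))
      (fun z hz ↦ hstrip z (him (sphere_subset_closedBall hz))) hE inter_subset_left hvol
      (fun t ht ↦ ht.2.trans (by linarith)) hx
    have hlog : 1 - (3 / 2 : ℝ)⁻¹ ≤ log (3 / 2) := one_sub_inv_le_log_of_pos (by norm_num)
    nlinarith
  have hint := intervalIntegral_le_of_le_on_Icc hcont hper (a := a - ρ / 4) (s := ρ / 2)
    (by positivity) (by linarith)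
    (fun x hx ↦ hneg (by rw [Real.closedBall_eq_Icc]; exact ⟨hx.1, by linarith [hx.2]⟩)) hreal
  nlinarith [mul_pos hβ (pow_pos hρ 2)]

lemma volume_Icc_zero_one_inter_le {S : Set ℝ} {s K : ℝ} (hs : 0 < s)
    (hS : ∀ a, volume.real (closedBall a s ∩ S) ≤ K) :
    volume.real (Icc 0 1 ∩ S) ≤ (1 / (2 * s) + 1) * K := by
  have hK : 0 ≤ K := measureReal_nonneg.trans (hS 0)
  let N := ⌊1 / (2 * s)⌋₊ + 1
  have hcover : Icc 0 1 ∩ S ⊆ ⋃ k ∈ Finset.range N, closedBall ((2 * k + 1) * s) s ∩ S := by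
    rintro x ⟨⟨hx₀, hx₁⟩, hxS⟩
    have hk := Nat.floor_le (show 0 ≤ x / (2 * s) by positivity)
    have hk' := Nat.lt_floor_add_one (x / (2 * s))
    rw [le_div_iff₀ (by positivity)] at hk
    rw [div_lt_iff₀ (by positivity)] at hk'
    refine mem_biUnion (x := ⌊x / (2 * s)⌋₊) ?_ ⟨?_, hxS⟩
    · exact Finset.mem_coe.2 (Finset.mem_range.2 (Nat.lt_succ_of_le (by gcongr)))
    · rw [Real.closedBall_eq_Icc]
      constructor <;> linarith
  calc volume.real (Icc 0 1 ∩ S)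
      ≤ volume.real (⋃ k ∈ Finset.range N, closedBall ((2 * k + 1) * s) s ∩ S) := by
        refine measureReal_mono hcover (measure_biUnion_lt_top (Finset.finite_toSet _)
          fun k _ ↦ ?_).ne
        exact measure_inter_lt_top_of_left_ne_top (measure_closedBall_lt_top.ne)
    _ ≤ ∑ k ∈ Finset.range N, volume.real (closedBall ((2 * k + 1) * s) s ∩ S) :=
        measureReal_biUnion_finset_le _ _
    _ ≤ ∑ _ ∈ Finset.range N, K := Finset.sum_le_sum fun k _ ↦ hS _
    _ = N * K := by rw [Finset.sum_const, Finset.card_range, nsmul_eq_mul]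
    _ ≤ (1 / (2 * s) + 1) * K := by
        gcongr
        rw [Nat.cast_succ]
        gcongr
        exact Nat.floor_le (by positivity)

theorem Subharmonic.volume_Icc_inter_le (hv : Subharmonic {z | |z.im| < 1} v)
    (hper : Function.Periodic (fun x : ℝ ↦ v x) 1) (hmean : ∫ x in (0 : ℝ)..1, v x = 0)
    (hβ : 0 < β) (hρ : 0 < ρ) (hρ' : ρ < 1) (hstrip : ∀ z : ℂ, |z.im| ≤ ρ → v z ≤ β)
    (hreal : ∀ x : ℝ, v x ≤ β * ρ) (lam : ℝ) :
    volume.real (Icc 0 1 ∩ {x : ℝ | v x ≤ -lam}) ≤ 3 * exp (2 - lam / (9 * β)) := by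
  refine (volume_Icc_zero_one_inter_le (by positivity) (hv.volume_closedBall_inter_le hper hmean hβ
    hρ hρ' hstrip hreal lam)).trans ?_
  calc (1 / (2 * (ρ / 4)) + 1) * (3 * ρ / 4 * exp (2 - lam / (9 * β)))
      = (3 / 2 + 3 / 4 * ρ) * exp (2 - lam / (9 * β)) := by
        field_simp
    _ ≤ 3 * exp (2 - lam / (9 * β)) := by
        gcongr
        linarith

end SublevelSet

/-! ### Large deviations -/

lemma fejerAverage_ofReal_ofReal (M : ℕ) (ω : ℝ) (w : ℂ → ℝ) (x : ℝ) :
    fejerAverage M (ω : ℂ) w x = fejerAverage M ω (fun y : ℝ ↦ w y) x := by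
  simp [fejerAverage]

lemma periodic_fejerAverage {E : Type*} [AddCommGroup E] {f : E → ℝ} {p : E}
    (hf : Function.Periodic f p) (M : ℕ) (ω : E) : Function.Periodic (fejerAverage M ω f) p :=
  fun x ↦ Finset.sum_congr rfl fun m _ ↦ by rw [add_right_comm, hf]

lemma continuous_fejerAverage {f : ℝ → ℝ} (hf : Continuous f) (M : ℕ) (ω : ℝ) :
    Continuous (fejerAverage M ω f) :=
  continuous_finsetSum _ fun _ _ ↦
    continuous_const.mul (hf.comp (continuous_id.add continuous_const))

lemma intervalIntegral_fejerAverage {f : ℝ → ℝ} (hf : Continuous f)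
    (hper : Function.Periodic f 1) {M : ℕ} (hM : 0 < M) (ω : ℝ) :
    ∫ x in (0 : ℝ)..1, fejerAverage M ω f x = ∫ x in (0 : ℝ)..1, f x := by
  have hterm (m : ℤ) : ∫ x in (0 : ℝ)..1, fejerWeight M m * f (x + m • ω)
      = fejerWeight M m * ∫ x in (0 : ℝ)..1, f x := by
    rw [intervalIntegral.integral_const_mul, intervalIntegral.integral_comp_add_right, zero_add,
      add_comm 1, hper.intervalIntegral_add_eq _ 0, zero_add]
  simp only [fejerAverage]
  rw [intervalIntegral.integral_finsetSum
    fun m _ ↦ Continuous.intervalIntegrable (by fun_prop) _ _]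
  simp only [hterm, ← Finset.sum_mul, sum_fejerWeight hM, one_mul]

section Deviation

variable {c A ω B ρ : ℝ} {w : ℂ → ℝ} {M : ℕ}

lemma Subharmonic.fejerAverage_sub_integral_le (hc : 0 < c) (hA : 1 ≤ A) (hω : IsDC c A ω)
    (hw : Subharmonic {z | |z.im| < 1} w) (hper : Function.Periodic (fun x : ℝ ↦ w x) 1)
    (hB : 0 < B) (hub : ∀ z : ℂ, |z.im| < 1 → w z ≤ B) (hlb : ∀ x : ℝ, -B ≤ w x) (hM : 0 < M)
    (hρ : 0 < ρ) (hρ' : ρ ≤ 1 / 2)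
    (hδ : (2 * c ^ (-(1 / A)) + 1) * (M : ℝ) ^ (-(1 / (2 * A))) ≤ ρ ^ 2) {z : ℂ}
    (hz : |z.im| ≤ ρ) :
    fejerAverage M (ω : ℂ) w z - ∫ t in (0 : ℝ)..1, w t ≤ 5 * B * ρ := by
  have hequi := calc
    B / ρ * ((2 * c ^ (-(1 / A)) + 1) * (M : ℝ) ^ (-(1 / (2 * A))))
      ≤ B / ρ * ρ ^ 2 := by gcongr
    _ = B * ρ := by field_simp
  linarith [hw.fejerAverage_le hc hA hω hper hub hlb hM hρ hρ' hz]

lemma Subharmonic.volume_fejerAverage_deviation_le (hc : 0 < c) (hA : 1 ≤ A) (hω : IsDC c A ω)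
    (hw : Subharmonic {z | |z.im| < 1} w) (hper : Function.Periodic (fun x : ℝ ↦ w x) 1)
    (hB : 0 < B) (hub : ∀ z : ℂ, |z.im| < 1 → w z ≤ B) (hlb : ∀ x : ℝ, -B ≤ w x) (hM : 0 < M)
    (hρ : 0 < ρ) (hρ' : ρ ≤ 1 / 2)
    (hδ : (2 * c ^ (-(1 / A)) + 1) * (M : ℝ) ^ (-(1 / (2 * A))) ≤ ρ ^ 4) {lam : ℝ}
    (hlam : 5 * B * ρ ^ 2 ≤ lam) :
    volume.real (Icc 0 1 ∩ {x : ℝ | lam < |fejerAverage M ω (fun y : ℝ ↦ w y) x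
        - ∫ t in (0 : ℝ)..1, w t|})
      ≤ 3 * exp (2 - lam / (45 * B * ρ)) := by
  let v : ℂ → ℝ := fun z ↦ fejerAverage M (ω : ℂ) w z - ∫ t in (0 : ℝ)..1, w t
  have hcont := hw.continuous_comp_ofReal
  have hvx (x : ℝ) : v x = fejerAverage M ω (fun y : ℝ ↦ w y) x - ∫ t in (0 : ℝ)..1, w t := by
    simp only [v, fejerAverage_ofReal_ofReal]
  have hv : Subharmonic {z | |z.im| < 1} v :=
    (Subharmonic.fejerAverage_horizontal (U := {y | |y| < 1}) hw M ω).sub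
      ⟨continuousOn_const, fun z r _ _ ↦ circleAverage_const _ _ _⟩
  have hvper : Function.Periodic (fun x : ℝ ↦ v x) 1 := fun x ↦ by
    simp only [hvx, periodic_fejerAverage hper M ω x]
  have hvmean : ∫ x in (0 : ℝ)..1, v x = 0 := by
    simp only [hvx]
    rw [intervalIntegral.integral_sub
      ((continuous_fejerAverage hcont M ω).intervalIntegrable _ _) (by simp),
      intervalIntegral_fejerAverage hcont hper hM, intervalIntegral.integral_const]
    simp
  have hvstrip (z : ℂ) (hz : |z.im| ≤ ρ) : v z ≤ 5 * B * ρ :=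
    hw.fejerAverage_sub_integral_le hc hA hω hper hB hub hlb hM hρ hρ'
      (hδ.trans (pow_le_pow_of_le_one hρ.le (by linarith) (by norm_num))) hz
  have hvreal (x : ℝ) : v x ≤ 5 * B * ρ * ρ :=
    (hw.fejerAverage_sub_integral_le hc hA hω hper hB hub hlb hM (pow_pos hρ 2) (by nlinarith)
      (hδ.trans_eq (by ring)) (by simpa using sq_nonneg ρ)).trans_eq (by ring)
  refine le_trans (measureReal_mono (inter_subset_inter_right _ fun x hx ↦ ?_)
    (measure_inter_lt_top_of_left_ne_top measure_Icc_lt_top.ne).ne)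
    ((hv.volume_Icc_inter_le hvper hvmean (by positivity) hρ (by linarith) hvstrip hvreal
      lam).trans_eq (by ring_nf))
  rw [mem_ofPred_eq, ← hvx, lt_abs] at hx
  rw [mem_ofPred_eq]
  rcases hx with hx | hx
  · linarith [hvreal x]
  · linarith

end Deviation

lemma eventually_const_mul_rpow_le_rpow {a b : ℝ} (hab : a < b) (C : ℝ) :
    ∀ᶠ x : ℝ in atTop, C * x ^ a ≤ x ^ b := by
  filter_upwards [(tendsto_rpow_atTop (sub_pos.2 hab)).eventually_ge_atTop C,
    eventually_gt_atTop 0] with x hC hx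
  calc C * x ^ a ≤ x ^ (b - a) * x ^ a := by gcongr
    _ = x ^ b := by rw [← rpow_add hx, sub_add_cancel]

lemma three_mul_exp_lt_exp {B Y : ℝ} (hB : 0 < B) (hY : 360 * B ≤ Y) :
    3 * exp (2 - Y / (45 * B)) < exp (-(1 / (90 * B)) * Y) := by
  have hY' : 4 ≤ Y / (90 * B) := by
    rw [le_div_iff₀ (by positivity)]
    linarith
  have hsplit : Y / (45 * B) = 2 * (Y / (90 * B)) := by
    ring
  calc 3 * exp (2 - Y / (45 * B))
      < exp 2 * exp (2 - Y / (45 * B)) := by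
        gcongr
        linarith [add_one_lt_exp (x := 2) two_ne_zero]
    _ = exp (4 - 2 * (Y / (90 * B))) := by
        rw [← exp_add, hsplit]
        ring_nf
    _ ≤ exp (-(Y / (90 * B))) := exp_le_exp.2 (by linarith)
    _ = exp (-(1 / (90 * B)) * Y) := by ring_nf

theorem large_deviation_subharmonic_general {A σ c B : ℝ} (hA : 1 ≤ A) (hσ : 0 < σ)
    (hσA : 16 * A * σ < 1) (hc : 0 < c) (hB : 0 < B) :
    ∃ ctil : ℝ, 0 < ctil ∧ ∃ M₀ : ℕ, ∀ ω : ℝ, IsDC c A ω → ∀ w : ℂ → ℝ,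
      Subharmonic {z : ℂ | |z.im| < 1} w → Function.Periodic (fun x : ℝ ↦ w x) 1 →
      (∀ z : ℂ, |z.im| < 1 → w z ≤ B) → (∀ x : ℝ, -B ≤ w x) → ∀ M : ℕ, M₀ ≤ M →
        volume (Icc 0 1 ∩ {x : ℝ | (M : ℝ) ^ (-σ)
            < |fejerAverage M ω (fun y : ℝ ↦ w y) x - ∫ t in (0 : ℝ)..1, w t|})
          < ENNReal.ofReal (exp (-ctil * (M : ℝ) ^ σ)) := by
  have hexponent : -(1 / (2 * A)) < -(8 * σ) := by
    rw [neg_lt_neg_iff, lt_div_iff₀ (by positivity)]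
    linarith
  obtain ⟨M₀, hM₀⟩ := eventually_atTop.1 <| tendsto_natCast_atTop_atTop.eventually <|
    ((tendsto_rpow_atTop hσ).eventually_ge_atTop (max 2 (360 * B))).and <|
    (eventually_const_mul_rpow_le_rpow hexponent (2 * c ^ (-(1 / A)) + 1)).and <|
    eventually_gt_atTop (0 : ℝ)
  refine ⟨1 / (90 * B), by positivity, M₀, fun ω hω w hw hper hub hlb M hM ↦ ?_⟩
  obtain ⟨hY, hδ, hM'⟩ := hM₀ M hM
  obtain ⟨hY₂, hYB⟩ := max_le_iff.1 hY
  rw [← ofReal_measureReal (measure_inter_lt_top_of_left_ne_top measure_Icc_lt_top.ne).ne,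
    ENNReal.ofReal_lt_ofReal_iff (exp_pos _)]
  refine lt_of_le_of_lt ?_ (three_mul_exp_lt_exp hB hYB)
  rw [rpow_neg hM'.le (8 * σ), mul_comm 8 σ, rpow_mul hM'.le] at hδ
  rw [rpow_neg hM'.le σ]
  generalize (M : ℝ) ^ σ = Y at *
  have : 0 < Y := by linarith
  have hlam : 5 * B * (Y ^ 2)⁻¹ ^ 2 ≤ Y⁻¹ := by
    calc 5 * B * (Y ^ 2)⁻¹ ^ 2 ≤ Y ^ 3 * (Y ^ 2)⁻¹ ^ 2 := by
          gcongr
          exact le_trans (by linarith) (le_self_pow₀ (by linarith) three_ne_zero)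
      _ = Y⁻¹ := by field_simp
  refine (hw.volume_fejerAverage_deviation_le hc hA hω hper hB hub hlb (Nat.cast_pos.1 hM')
    (ρ := (Y ^ 2)⁻¹) (by positivity) ?_ ?_ hlam).trans_eq ?_
  · rw [one_div]
    gcongr
    nlinarith
  · refine hδ.trans_eq ?_
    rw [inv_pow, ← pow_mul]
    exact_mod_cast congrArg Inv.inv (rpow_natCast Y 8)
  · field_simp

/-- Large deviation theorem for Fejér-type averages of subharmonic functions along
a Diophantine shift. One may take `σ = 1/(50A)`. -/
theorem large_deviation_subharmonic (A : ℝ) (hA : 1 ≤ A) :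
    ∃ σ : ℝ, 0 < σ ∧ σ = 1 / (50 * A) ∧
      ∀ c B : ℝ, 0 < c → 1 ≤ B →
        ∃ ctil : ℝ, 0 < ctil ∧ ∃ M₀ : ℕ,
          ∀ ω : ℝ, IsDC c A ω →
          ∀ u : ℝ → ℝ, Function.Periodic u 1 → (∀ x : ℝ, |u x| ≤ 1) →
          ∀ utilde : ℂ → ℝ,
            (∀ x : ℝ, utilde (x : ℂ) = u x) →
            Subharmonic {z : ℂ | |z.im| < 1} utilde →
            (∀ z : ℂ, |z.im| < 1 → |utilde z| ≤ B) →
          ∀ M : ℕ, M₀ ≤ M →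
            volume {x : ℝ | x ∈ Set.Icc (0:ℝ) 1 ∧
                (M : ℝ) ^ (-σ) <
                  |(∑ m ∈ Finset.Icc (-(M : ℤ) + 1) ((M : ℤ) - 1),
                      (((M : ℝ) - (|m| : ℝ)) / (M : ℝ) ^ 2) * u (x + m * ω))
                    - ∫ t in (0:ℝ)..1, u t|}
              < ENNReal.ofReal (Real.exp (-ctil * (M : ℝ) ^ σ)) := by
  have hσ : 16 * A * (1 / (50 * A)) < 1 := by
    field_simp
    norm_num
  refine ⟨1 / (50 * A), by positivity, rfl, fun c B hc hB ↦ ?_⟩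
  obtain ⟨ctil, hctil, M₀, hM₀⟩ := large_deviation_subharmonic_general hA (by positivity) hσ hc
    (zero_lt_one.trans_le hB)
  refine ⟨ctil, hctil, M₀, fun ω hω u hper _ w hwu hw hwB M hM ↦ ?_⟩
  obtain rfl : (fun x : ℝ ↦ w x) = u := funext hwu
  simpa only [fejerAverage, fejerWeight, zsmul_eq_mul, inter_def, mem_ofPred_eq] using
    hM₀ ω hω w hw hper (fun z hz ↦ le_of_abs_le (hwB z hz))
      (fun x ↦ neg_le_of_abs_le (hwB x (by simp))) M hM
end
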